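/- For every integer n ≥ 1, every r ∈ [0, π/2) and every η ∈ (0, π), the Green function of the conformal sub-Laplacian −L + 4n(n+1) on S^{4n+3} is given by ∫_0^∞ p_t(r, η)·e^{−4n(n+1)t} dt = Γ(n)·Γ(n+1) / (8π^{2n+2}·(1 − 2·cos r·cos η + cos²r)^{n+1}). -/

import Mathlib

open Real MeasureTheory Filter Topology Set

noncomputable section

/-- The defining formula of the Jacobi polynomial `P_k^{(α,β)}` on `(-1,1)`. -/
def jacobiFormula (k α β : ℕ) (x : ℝ) : ℝ :=
  ((-1 : ℝ) ^ k / (2 ^ k * Nat.factorial k)) * (1 - x) ^ (-(α : ℤ)) * (1 + x) ^ (-(β : ℤ)) *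
    iteratedDeriv k (fun y => (1 - y) ^ (α + k) * (1 + y) ^ (β + k)) x

/-- `J k α β` is the Jacobi polynomial `P_k^{(α,β)}`: a polynomial function satisfying the
defining formula on `(-1,1)`. -/
def IsJacobi (J : ℕ → ℕ → ℕ → ℝ → ℝ) : Prop :=
  ∀ k α β : ℕ, (∃ p : Polynomial ℝ, ∀ x : ℝ, J k α β x = p.eval x) ∧
    ∀ x ∈ Set.Ioo (-1 : ℝ) 1, J k α β x = jacobiFormula k α β x

/-- The vertical factor `sin((m+1)η)/sin η`, extended by its limit `m+1` at `η = 0`. -/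
def vertFactor (m : ℕ) (η : ℝ) : ℝ :=
  if η = 0 then (m + 1 : ℝ) else Real.sin ((m + 1) * η) / Real.sin η

/-- The general term of the double series defining the subelliptic heat kernel of the
quaternionic Hopf fibration on `S^{4n+3}`. -/
def pTerm (n : ℕ) (J : ℕ → ℕ → ℕ → ℝ → ℝ) (t r η : ℝ) (mk : ℕ × ℕ) : ℝ :=
  (Real.Gamma (2 * n) / (2 * Real.pi ^ (2 * n + 2))) *
    (2 * (mk.2 : ℝ) + mk.1 + 2 * n + 1) * ((mk.1 : ℝ) + 1) *
    (Nat.choose (mk.2 + mk.1 + 2 * n) (2 * n - 1) : ℝ) *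
    Real.exp (-(4 * ((mk.2 : ℝ) * (mk.2 + 2 * n + mk.1 + 1) + n * mk.1)) * t) *
    vertFactor mk.1 η * Real.cos r ^ mk.1 * J mk.2 (2 * n - 1) (mk.1 + 1) (Real.cos (2 * r))

/-- The subelliptic heat kernel of the quaternionic Hopf fibration on `S^{4n+3}`. -/
def pKernel (n : ℕ) (J : ℕ → ℕ → ℕ → ℝ → ℝ) (t r η : ℝ) : ℝ :=
  ∑' mk : ℕ × ℕ, pTerm n J t r η mk

/-- The defining formula of the Gegenbauer polynomial `C_m^{2n+1}` on `(-1,1)`. -/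
def gegenbauerFormula (n m : ℕ) (x : ℝ) : ℝ :=
  ((-1 : ℝ) ^ m / 2 ^ m) *
    (Real.Gamma ((m : ℝ) + 4 * n + 2) * Real.Gamma (2 * (n : ℝ) + 3 / 2) /
      (Real.Gamma (4 * (n : ℝ) + 2) * Real.Gamma ((m : ℝ) + 1) *
        Real.Gamma (2 * (n : ℝ) + m + 3 / 2))) *
    (1 - x ^ 2) ^ (-(2 * (n : ℝ) + 1 / 2)) *
    iteratedDeriv m (fun y => (1 - y ^ 2) ^ (2 * (n : ℝ) + m + 1 / 2)) x

/-- `C m` is the Gegenbauer polynomial `C_m^{2n+1}`. -/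
def IsGegenbauer (n : ℕ) (C : ℕ → ℝ → ℝ) : Prop :=
  ∀ m : ℕ, (∃ p : Polynomial ℝ, ∀ x : ℝ, C m x = p.eval x) ∧
    ∀ x ∈ Set.Ioo (-1 : ℝ) 1, C m x = gegenbauerFormula n m x

/-- The Riemannian heat kernel of `S^{4n+3}`. -/
def qKernel (n : ℕ) (C : ℕ → ℝ → ℝ) (t x : ℝ) : ℝ :=
  (Real.Gamma (2 * n + 1) / (2 * Real.pi ^ (2 * n + 2))) *
    ∑' m : ℕ, ((m : ℝ) + 2 * n + 1) * Real.exp (-((m : ℝ) * (m + 4 * n + 2)) * t) * C m x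

/-- The general term of the double series defining the subelliptic heat kernel on `CP^{2n+1}`. -/
def hTerm (n : ℕ) (J : ℕ → ℕ → ℕ → ℝ → ℝ) (t r φ : ℝ) (mk : ℕ × ℕ) : ℝ :=
  (Real.Gamma (2 * n) / (4 * Real.pi ^ (2 * n + 2))) *
    (2 * (mk.2 : ℝ) + 2 * mk.1 + 2 * n + 1) * (2 * (mk.1 : ℝ) + 1) *
    (Nat.choose (mk.2 + 2 * mk.1 + 2 * n) (2 * n - 1) : ℝ) *
    Real.exp (-(4 * (mk.2 : ℝ) * (mk.2 + 2 * n + 2 * mk.1 + 1) + 8 * n * mk.1) * t) *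
    Real.cos r ^ (2 * mk.1) * J mk.1 0 0 (Real.cos (2 * φ)) *
    J mk.2 (2 * n - 1) (2 * mk.1 + 1) (Real.cos (2 * r))

/-- The subelliptic heat kernel of the fibration `CP^1 → CP^{2n+1} → HP^n`. -/
def hKernel (n : ℕ) (J : ℕ → ℕ → ℕ → ℝ → ℝ) (t r φ : ℝ) : ℝ :=
  ∑' mk : ℕ × ℕ, hTerm n J t r φ mk

end

/-!
In the coordinates `(s, θ) = (cos r, η)` the eigenfunctions of the sub-Laplacian, multiplied by
`s * sin θ`, become `s ^ (m + 1) * P_k^{(2n-1,m+1)}(2 s ^ 2 - 1) * sin ((m + 1)θ)`, smooth and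
vanishing on the part of the boundary of `[0, 1] × [0, π]` where the operator is singular. Finite
combinations of them satisfy a minimum principle, so the heat semigroup preserves positivity.

The claimed Green function `s * sin θ / (1 - 2 s cos θ + s ^ 2) ^ (n + 1)` is, for `s < 1`, a power
series in the monomials `s ^ (m + 1 + 2i) * sin ((m + 1)θ)`, each of which has a finite Jacobi
expansion. Replacing `s` by `z s` with `z < 1` and multiplying by `z ^ n` makes the initial datum a
uniformly convergent series, nonnegative and increasing in `z`. Its heat evolution at time `t` is
therefore increasing in `z`, and it is decreasing in `t` because minus its time derivative is again
the evolution of a nonnegative datum. Letting `z → 1`, its series along the eigenfunctions tends to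
the integral of the heat kernel over `[t, ∞)`. The two monotonicities then squeeze the limit `t → 0`
of this integral to the Green function, and nonnegativity of the heat kernel gives convergence of
the integral over `(0, ∞)`.
-/

/-! ### Jacobi polynomials in the variable `(1 + x) / 2` -/

section Jacobi

open Polynomial

theorem cast_succ_mul_choose_succ (n k : ℕ) :
    ((k : ℝ) + 1) * n.choose (k + 1) = ((n : ℝ) - k) * n.choose k := by
  rcases le_or_gt k n with hk | hk
  · have h := congrArg (Nat.cast (R := ℝ)) (Nat.choose_succ_right_eq n k)
    push_cast [Nat.cast_sub hk] at h
    linarith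
  · rw [Nat.choose_eq_zero_of_lt hk, Nat.choose_eq_zero_of_lt (hk.trans k.lt_succ_self)]
    simp

/-- The coefficient of `ρ ^ i` in the Jacobi polynomial `P_k^{(α,β)}(2ρ - 1)`; it vanishes for
`k < i` because `β + i` then exceeds `k + β`. -/
noncomputable def jacobiCoeff (k α β i : ℕ) : ℝ :=
  (-1) ^ (k + i) * (k + β).choose (β + i) * (k + α + β + i).choose i

/-- The Jacobi polynomial `P_k^{(α,β)}(2ρ - 1)` as a polynomial in `ρ`. -/
noncomputable def jacobiPoly (k α β : ℕ) : ℝ[X] :=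
  ∑ i ∈ Finset.range (k + 1), monomial i (jacobiCoeff k α β i)

variable (k α β i : ℕ)

theorem jacobiCoeff_eq_zero_of_lt {k i : ℕ} (h : k < i) : jacobiCoeff k α β i = 0 := by
  simp [jacobiCoeff, Nat.choose_eq_zero_of_lt (show k + β < β + i by omega)]

theorem coeff_jacobiPoly : (jacobiPoly k α β).coeff i = jacobiCoeff k α β i := by
  simp only [jacobiPoly, finsetSum_coeff, coeff_monomial, Finset.sum_ite_eq', Finset.mem_range]
  split_ifs with h
  · rfl
  · exact (jacobiCoeff_eq_zero_of_lt α β (by omega)).symm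

theorem eval_jacobiPoly (ρ : ℝ) :
    (jacobiPoly k α β).eval ρ = ∑ i ∈ Finset.range (k + 1), jacobiCoeff k α β i * ρ ^ i := by
  simp [jacobiPoly, eval_finsetSum]

theorem jacobiCoeff_succ_right :
    ((i : ℝ) + 1) * (i + 1 + β) * jacobiCoeff k α β (i + 1) =
      (i - k) * (i + k + α + β + 1) * jacobiCoeff k α β i := by
  have h₁ := cast_succ_mul_choose_succ (k + β) (β + i)
  have h₂ := congrArg (Nat.cast (R := ℝ)) (Nat.add_one_mul_choose_eq (k + α + β + i) i)
  simp only [jacobiCoeff, ← add_assoc, pow_succ]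
  push_cast at h₁ h₂
  linear_combination
    (-1) ^ (k + i) * (-(i + 1) * ((k + α + β + i + 1).choose (i + 1) : ℝ) * h₁
      + (k - i) * ((k + β).choose (β + i) : ℝ) * h₂)

theorem jacobiCoeff_succ_left_zero :
    (k + 1 : ℝ) * jacobiCoeff (k + 1) α β 0 =
      -((β + 1) * jacobiCoeff k (α + 1) (β + 1) 0) := by
  have h := cast_succ_mul_choose_succ (k + 1 + β) β
  simp only [jacobiCoeff, add_zero, Nat.choose_zero_right, pow_succ, Nat.cast_one,
    ← add_assoc, add_right_comm k β 1] at h ⊢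
  push_cast at h
  linear_combination (-1) ^ k * h

theorem jacobiCoeff_succ_left_succ :
    (k + 1 : ℝ) * jacobiCoeff (k + 1) α β (i + 1) =
      (i + α + β + 2) * jacobiCoeff k (α + 1) (β + 1) i
        - (i + β + 2) * jacobiCoeff k (α + 1) (β + 1) (i + 1) := by
  obtain ⟨N, hN⟩ : ∃ N, N = k + α + β + i + 2 := ⟨_, rfl⟩
  have h₁ := cast_succ_mul_choose_succ (k + β + 1) (β + i + 1)
  have h₂ := cast_succ_mul_choose_succ N i
  have h₃ := congrArg (Nat.cast (R := ℝ)) (Nat.choose_succ_succ N i)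
  simp only [jacobiCoeff, show k + 1 + β = k + β + 1 by ring, show β + (i + 1) = β + i + 1 by ring,
    show k + 1 + α + β + (i + 1) = N by omega, show k + (β + 1) = k + β + 1 by ring,
    show β + 1 + i = β + i + 1 by ring, show k + (α + 1) + (β + 1) + i = N by omega,
    show β + 1 + (i + 1) = β + i + 1 + 1 by ring,
    show k + (α + 1) + (β + 1) + (i + 1) = N + 1 by omega,
    show k + 1 + (i + 1) = k + i + 1 + 1 by ring, show k + (i + 1) = k + i + 1 by ring, pow_succ]
  rw [Nat.succ_eq_add_one] at h₃
  rw [h₃]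
  subst hN
  push_cast at h₁ h₂ ⊢
  linear_combination (-1) ^ (k + i) * ((k + β + 1).choose (β + i + 1) : ℝ) * h₂
    - (-1) ^ (k + i) *
      (((k + α + β + i + 2).choose i : ℝ) + (k + α + β + i + 2).choose (i + 1)) * h₁

theorem succ_mul_jacobiPoly_succ :
    C (k + 1 : ℝ) * jacobiPoly (k + 1) α β =
      C (α + β + 2 : ℝ) * (jacobiPoly k (α + 1) (β + 1) * X)
        + derivative (jacobiPoly k (α + 1) (β + 1)) * X * X
        - derivative (jacobiPoly k (α + 1) (β + 1)) * X
        - C (β + 1 : ℝ) * jacobiPoly k (α + 1) (β + 1) := by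
  ext i
  simp only [coeff_sub, coeff_add, coeff_C_mul, coeff_jacobiPoly]
  rcases i with _ | _ | i
  · rw [jacobiCoeff_succ_left_zero]
    simp [coeff_jacobiPoly]
  · rw [jacobiCoeff_succ_left_succ]
    simp only [coeff_mul_X, mul_coeff_zero, coeff_X_zero, coeff_derivative, coeff_jacobiPoly]
    push_cast
    ring
  · rw [jacobiCoeff_succ_left_succ]
    simp only [coeff_mul_X, coeff_derivative, coeff_jacobiPoly]
    push_cast
    ring

theorem hasDerivAt_one_sub_pow_mul_one_add_pow_mul_eval (a b : ℕ) (p : ℝ[X]) (x : ℝ) :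
    HasDerivAt (fun y : ℝ ↦ (1 - y) ^ (a + 1) * (1 + y) ^ (b + 1) * p.eval ((1 + y) / 2))
      ((1 - x) ^ a * (1 + x) ^ b * (((b + 1) * (1 - x) - (a + 1) * (1 + x)) * p.eval ((1 + x) / 2)
        + (1 - x) * (1 + x) / 2 * (derivative p).eval ((1 + x) / 2))) x := by
  have hsub := ((hasDerivAt_id x).const_sub 1).fun_pow (a + 1)
  have hadd := ((hasDerivAt_id x).const_add 1).fun_pow (b + 1)
  have hp := (p.hasDerivAt ((1 + x) / 2)).comp x (((hasDerivAt_id x).const_add 1).div_const 2)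
  refine ((hsub.fun_mul hadd).fun_mul hp).congr_deriv ?_
  simp only [id, Function.comp_apply, Nat.add_sub_cancel]
  push_cast
  ring

theorem iteratedDeriv_one_sub_pow_mul_one_add_pow :
    iteratedDeriv k (fun y : ℝ ↦ (1 - y) ^ (α + k) * (1 + y) ^ (β + k)) = fun x ↦
      (-2) ^ k * k.factorial * ((1 - x) ^ α * (1 + x) ^ β *
        (jacobiPoly k α β).eval ((1 + x) / 2)) := by
  induction k generalizing α β with
  | zero => funext x; simp [jacobiPoly, jacobiCoeff]
  | succ k ih =>
    funext x
    have hrec := congrArg (eval ((1 + x) / 2)) (succ_mul_jacobiPoly_succ k α β)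
    simp only [eval_sub, eval_add, eval_mul, eval_C, eval_X] at hrec
    rw [iteratedDeriv_succ, add_comm k 1, ← add_assoc, ← add_assoc, ih (α + 1) (β + 1),
      add_comm 1 k,
      ((hasDerivAt_one_sub_pow_mul_one_add_pow_mul_eval α β _ x).const_mul _).deriv,
      Nat.factorial_succ]
    push_cast
    linear_combination (-2) ^ k * k.factorial * ((1 - x) ^ α * (1 + x) ^ β) * 2 * hrec

theorem IsJacobi.eq_eval_jacobiPoly {J : ℕ → ℕ → ℕ → ℝ → ℝ} (hJ : IsJacobi J) (ρ : ℝ) :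
    J k α β (2 * ρ - 1) = (jacobiPoly k α β).eval ρ := by
  obtain ⟨⟨p, hp⟩, hrodrigues⟩ := hJ k α β
  have hp_eq : p = (jacobiPoly k α β).comp (C (1 / 2) * (1 + X)) := by
    refine eq_of_infinite_eval_eq _ _
      ((Ioo_infinite (show (-1 : ℝ) < 1 by norm_num)).mono fun x hx ↦ ?_)
    have hsub : 1 - x ≠ 0 := by linarith [hx.2]
    have hadd : 1 + x ≠ 0 := by linarith [hx.1]
    simp only [mem_ofPred_eq, eval_comp, eval_mul, eval_C, eval_add, eval_one, eval_X]
    rw [← hp, hrodrigues x hx, jacobiFormula, iteratedDeriv_one_sub_pow_mul_one_add_pow, zpow_neg,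
      zpow_neg, zpow_natCast, zpow_natCast, neg_pow (2 : ℝ), one_div_mul_eq_div]
    field_simp
    rw [← pow_mul, pow_mul', neg_one_sq, one_pow, one_mul]
  rw [hp, hp_eq]
  simp only [eval_comp, eval_mul, eval_C, eval_add, eval_one, eval_X]
  congr 1
  ring

end Jacobi

section JacobiExpansion

open Polynomial

/-- The coefficient of `P_k^{(α,β)}(2ρ - 1)` in the Jacobi expansion of `ρ ^ i`. -/
noncomputable def monomialJacobiCoeff (α β i k : ℕ) : ℝ :=
  (2 * k + α + β + 1) * i.descFactorial k *
    ((k + α + β).factorial * (i + β).factorial /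
      ((k + β).factorial * (i + k + α + β + 1).factorial))

variable (α β i k l : ℕ)

theorem monomialJacobiCoeff_eq_zero_of_lt {i k : ℕ} (h : i < k) :
    monomialJacobiCoeff α β i k = 0 := by
  simp [monomialJacobiCoeff, Nat.descFactorial_of_lt h]

theorem monomialJacobiCoeff_succ :
    ((i : ℝ) + 1 - k) * (i + k + α + β + 2) * monomialJacobiCoeff α β (i + 1) k =
      (i + 1) * (i + 1 + β) * monomialJacobiCoeff α β i k := by
  have hdesc : ((i : ℝ) + 1 - k) * (i + 1).descFactorial k = (i + 1) * i.descFactorial k := by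
    rcases le_or_gt k (i + 1) with h | h
    · have := congrArg (Nat.cast (R := ℝ)) (Nat.succ_descFactorial i k)
      push_cast [Nat.cast_sub h] at this
      exact this
    · simp [Nat.descFactorial_of_lt h, Nat.descFactorial_of_lt (show i < k by omega)]
  have hβ : ((i + 1 + β).factorial : ℝ) = (i + 1 + β) * (i + β).factorial := by
    rw [show i + 1 + β = i + β + 1 by ring, Nat.factorial_succ]
    push_cast
    ring
  have hα : ((i + 1 + k + α + β + 1).factorial : ℝ) =
      (i + k + α + β + 2) * (i + k + α + β + 1).factorial := by
    rw [show i + 1 + k + α + β + 1 = i + k + α + β + 1 + 1 by ring, Nat.factorial_succ]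
    push_cast
    ring
  have hpos : (i + k + α + β + 2 : ℝ) ≠ 0 := by positivity
  rw [monomialJacobiCoeff, monomialJacobiCoeff, hβ, hα]
  field_simp
  linear_combination hdesc

theorem monomialJacobiCoeff_self_mul_jacobiCoeff_self :
    monomialJacobiCoeff α β i i * jacobiCoeff i α β i = 1 := by
  have hchoose : ((i + α + β + i).choose i : ℝ) =
      (i + α + β + i).factorial / (i.factorial * (i + α + β).factorial) := by
    rw [Nat.cast_choose ℝ (by omega : i ≤ i + α + β + i), Nat.add_sub_cancel]
  rw [monomialJacobiCoeff, jacobiCoeff, hchoose, Nat.descFactorial_self, add_comm β i,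
    Nat.choose_self, (Even.add_self i).neg_one_pow,
    show i + i + α + β + 1 = i + α + β + i + 1 by ring, Nat.factorial_succ]
  push_cast
  field_simp
  ring

theorem sum_monomialJacobiCoeff_mul_jacobiCoeff_succ :
    ((i : ℝ) + 1 - l) * (i + l + α + β + 2) *
        ∑ k ∈ Finset.range (i + 2), monomialJacobiCoeff α β (i + 1) k * jacobiCoeff k α β l =
      (i + 1) * (i + 1 + β) *
          ∑ k ∈ Finset.range (i + 1), monomialJacobiCoeff α β i k * jacobiCoeff k α β l
        - (l + 1) * (l + 1 + β) * ∑ k ∈ Finset.range (i + 2),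
            monomialJacobiCoeff α β (i + 1) k * jacobiCoeff k α β (l + 1) := by
  have hlast : ∑ k ∈ Finset.range (i + 1), monomialJacobiCoeff α β i k * jacobiCoeff k α β l =
      ∑ k ∈ Finset.range (i + 2), monomialJacobiCoeff α β i k * jacobiCoeff k α β l := by
    rw [Finset.sum_range_succ _ (i + 1),
      monomialJacobiCoeff_eq_zero_of_lt α β (Nat.lt_succ_self i), zero_mul, add_zero]
  rw [hlast, Finset.mul_sum, Finset.mul_sum, Finset.mul_sum, ← Finset.sum_sub_distrib]
  refine Finset.sum_congr rfl fun k _ ↦ ?_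
  linear_combination jacobiCoeff k α β l * monomialJacobiCoeff_succ α β i k
    + monomialJacobiCoeff α β (i + 1) k * jacobiCoeff_succ_right k α β l

theorem sum_monomialJacobiCoeff_mul_jacobiCoeff_self :
    ∑ k ∈ Finset.range (i + 1), monomialJacobiCoeff α β i k * jacobiCoeff k α β i = 1 := by
  rw [Finset.sum_range_succ, Finset.sum_eq_zero, zero_add,
    monomialJacobiCoeff_self_mul_jacobiCoeff_self]
  intro k hk
  rw [jacobiCoeff_eq_zero_of_lt α β (Finset.mem_range.mp hk), mul_zero]

theorem sum_monomialJacobiCoeff_mul_jacobiCoeff_of_lt {i l : ℕ} (h : l < i) :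
    ∑ k ∈ Finset.range (i + 1), monomialJacobiCoeff α β i k * jacobiCoeff k α β l = 0 := by
  induction i generalizing l with
  | zero => omega
  | succ i ih =>
    obtain ⟨d, hd⟩ := Nat.exists_eq_add_of_le (Nat.le_of_lt_succ h)
    induction d generalizing l with
    | zero =>
      obtain rfl : i = l := hd
      have hrec := sum_monomialJacobiCoeff_mul_jacobiCoeff_succ α β i i
      rw [sum_monomialJacobiCoeff_mul_jacobiCoeff_self,
        sum_monomialJacobiCoeff_mul_jacobiCoeff_self, sub_self] at hrec
      exact (mul_eq_zero.mp hrec).resolve_left (by ring_nf; positivity)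
    | succ d ihd =>
      have hrec := sum_monomialJacobiCoeff_mul_jacobiCoeff_succ α β i l
      rw [ih (by omega), ihd (l := l + 1) (by omega) (by omega), mul_zero, mul_zero,
        sub_zero] at hrec
      have hl : (0 : ℝ) < i + 1 - l := by
        have : (l : ℝ) < i + 1 := by exact_mod_cast h
        linarith
      exact (mul_eq_zero.mp hrec).resolve_left (by positivity)

theorem sum_monomialJacobiCoeff_mul_jacobiPoly :
    ∑ k ∈ Finset.range (i + 1), C (monomialJacobiCoeff α β i k) * jacobiPoly k α β = X ^ i := by
  ext l
  simp only [finsetSum_coeff, coeff_C_mul, coeff_jacobiPoly, coeff_X_pow]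
  rcases lt_trichotomy l i with h | rfl | h
  · rw [sum_monomialJacobiCoeff_mul_jacobiCoeff_of_lt α β h, if_neg h.ne]
  · rw [sum_monomialJacobiCoeff_mul_jacobiCoeff_self, if_pos rfl]
  · rw [if_neg h.ne', Finset.sum_eq_zero]
    intro k hk
    rw [jacobiCoeff_eq_zero_of_lt α β (by have := Finset.mem_range.mp hk; omega), mul_zero]

end JacobiExpansion

section JacobiBound

variable {x : ℝ} (hx : 0 < x)
include hx

theorem choose_mul_pow_le_exp (n i : ℕ) : n.choose i * x ^ i ≤ exp (x * n) := by
  calc (n.choose i : ℝ) * x ^ i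
      ≤ (n : ℝ) ^ i / i.factorial * x ^ i := by gcongr; exact Nat.choose_le_pow_div i n
    _ = (x * n) ^ i / i.factorial := by rw [mul_pow]; ring
    _ ≤ exp (x * n) := Real.pow_div_factorial_le_exp _ (by positivity) i

theorem abs_jacobiCoeff_mul_pow_le (k α β i : ℕ) :
    |jacobiCoeff k α β i| * x ^ k ≤ exp (x * (3 * k + α + 2 * β)) := by
  rcases lt_or_ge k i with hi | hi
  · rw [jacobiCoeff_eq_zero_of_lt α β hi, abs_zero, zero_mul]
    positivity
  · have hi' : (i : ℝ) ≤ k := by exact_mod_cast hi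
    have habs : |jacobiCoeff k α β i| * x ^ k =
        ((k + β).choose (k - i) * x ^ (k - i)) * ((k + α + β + i).choose i * x ^ i) := by
      rw [jacobiCoeff, abs_mul, abs_mul, abs_pow, abs_neg, abs_one, one_pow, one_mul, Nat.abs_cast,
        Nat.abs_cast, show k - i = k + β - (β + i) by omega,
        Nat.choose_symm (show β + i ≤ k + β by omega),
        show x ^ k = x ^ (k + β - (β + i)) * x ^ i by rw [← pow_add]; congr 1; omega]
      ring
    calc |jacobiCoeff k α β i| * x ^ k
        ≤ exp (x * (k + β : ℕ)) * exp (x * (k + α + β + i : ℕ)) := by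
          rw [habs]
          gcongr <;> exact choose_mul_pow_le_exp hx _ _
      _ = exp (x * (2 * k + i + α + 2 * β)) := by
          rw [← exp_add]
          push_cast
          ring_nf
      _ ≤ exp (x * (3 * k + α + 2 * β)) := by gcongr; linarith

theorem abs_eval_jacobiPoly_mul_pow_le (k α β : ℕ) {ρ : ℝ} (hρ : ρ ∈ Icc (0 : ℝ) 1) :
    |(jacobiPoly k α β).eval ρ| * x ^ k ≤ (k + 1) * exp (x * (3 * k + α + 2 * β)) := by
  rw [eval_jacobiPoly]
  calc |∑ i ∈ Finset.range (k + 1), jacobiCoeff k α β i * ρ ^ i| * x ^ k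
      ≤ (∑ i ∈ Finset.range (k + 1), |jacobiCoeff k α β i|) * x ^ k := by
        gcongr
        refine (Finset.abs_sum_le_sum_abs _ _).trans (Finset.sum_le_sum fun i _ ↦ ?_)
        rw [abs_mul, abs_of_nonneg (pow_nonneg hρ.1 i)]
        exact mul_le_of_le_one_right (abs_nonneg _) (pow_le_one₀ hρ.1 hρ.2)
    _ ≤ ∑ i ∈ Finset.range (k + 1), exp (x * (3 * k + α + 2 * β)) := by
        rw [Finset.sum_mul]
        exact Finset.sum_le_sum fun i _ ↦ abs_jacobiCoeff_mul_pow_le hx k α β i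
    _ = (k + 1) * exp (x * (3 * k + α + 2 * β)) := by simp

end JacobiBound

/-! ### The positive minimum principle -/

section MinimumPrinciple

theorem second_deriv_nonneg_of_isLocalMin {f : ℝ → ℝ} {a : ℝ} (hf : ContinuousAt f a)
    (hmin : IsLocalMin f a) : 0 ≤ deriv (deriv f) a := by
  by_contra! hneg
  have hmax : IsLocalMax f a := isLocalMax_of_deriv_deriv_neg hneg hmin.deriv_eq_zero hf
  have hconst : f =ᶠ[𝓝 a] fun _ ↦ f a := by
    filter_upwards [hmin, hmax] with x h₁ h₂ using le_antisymm h₂ h₁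
  rw [hconst.deriv.deriv_eq] at hneg
  simp at hneg

theorem deriv_nonpos_of_isMinOn_Icc_right {f : ℝ → ℝ} {f' a b : ℝ} (hab : a < b)
    (hf : HasDerivAt f f' b) (hmin : IsMinOn f (Icc a b) b) : f' ≤ 0 := by
  have hslope := (hasDerivWithinAt_iff_tendsto_slope' self_notMem_Iio).1 hf.hasDerivWithinAt
  refine le_of_tendsto hslope ?_
  filter_upwards [Ioo_mem_nhdsLT hab] with x hx
  rw [slope_def_field]
  exact div_nonpos_of_nonneg_of_nonpos (sub_nonneg.2 (hmin ⟨hx.1.le, hx.2.le⟩))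
    (sub_nonpos.2 hx.2.le)

variable {X ι : Type*} {K : Set X} {S : Finset ι} {φ : ι → X → ℝ} {μ : ι → ℝ}

/-- The span of the `φ j`, `j ∈ S`, satisfies the positive minimum principle on `K` for the
operator acting on each `φ j` as multiplication by `μ j`. -/
def PositiveMinimumPrinciple (K : Set X) (S : Finset ι) (φ : ι → X → ℝ) (μ : ι → ℝ) : Prop :=
  ∀ b : ι → ℝ, ∀ y ∈ K, IsMinOn (fun x ↦ ∑ j ∈ S, b j * φ j x) K y →
    ∑ j ∈ S, b j * φ j y < 0 → 0 ≤ ∑ j ∈ S, μ j * b j * φ j y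

theorem hasDerivAt_sum_mul_exp (a : ι → ℝ) (x : X) (t : ℝ) :
    HasDerivAt (fun τ ↦ ∑ j ∈ S, a j * exp (μ j * τ) * φ j x)
      (∑ j ∈ S, μ j * (a j * exp (μ j * t)) * φ j x) t := by
  refine HasDerivAt.fun_sum fun j _ ↦ ?_
  have h := ((((hasDerivAt_id t).const_mul (μ j)).exp).const_mul (a j)).mul_const (φ j x)
  refine h.congr_deriv ?_
  simp only [id, mul_one]
  ring

variable [TopologicalSpace X]

theorem continuousOn_sum_mul_exp (hφ : ∀ j ∈ S, ContinuousOn (φ j) K) (a : ι → ℝ) (I : Set ℝ) :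
    ContinuousOn (fun p : ℝ × X ↦ ∑ j ∈ S, a j * exp (μ j * p.1) * φ j p.2) (I ×ˢ K) :=
  continuousOn_finsetSum _ fun j hj ↦ ContinuousOn.mul (by fun_prop)
    ((hφ j hj).comp continuousOn_snd fun _ hp ↦ hp.2)

namespace PositiveMinimumPrinciple

theorem neg_le_sum_mul_exp (hmin : PositiveMinimumPrinciple K S φ μ) (hK : IsCompact K)
    (hφ : ∀ j ∈ S, ContinuousOn (φ j) K) {a : ι → ℝ} {δ : ℝ} (hδ : 0 ≤ δ)
    (h₀ : ∀ x ∈ K, -δ ≤ ∑ j ∈ S, a j * φ j x) {T : ℝ} (hT : 0 ≤ T) {x₀ : X} (hx₀ : x₀ ∈ K) :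
    -δ ≤ ∑ j ∈ S, a j * exp (μ j * T) * φ j x₀ := by
  by_contra! hneg
  let u : ℝ × X → ℝ := fun p ↦ ∑ j ∈ S, a j * exp (μ j * p.1) * φ j p.2
  -- A small drift makes the first time at which the lower bound fails strict.
  obtain ⟨κ, hκ, hκT⟩ : ∃ κ > 0, u (T, x₀) + κ * T < -δ := by
    refine ⟨(-δ - u (T, x₀)) / (T + 1), div_pos (sub_pos.2 hneg) (by linarith), ?_⟩
    have hlt : (-δ - u (T, x₀)) / (T + 1) * T < -δ - u (T, x₀) := by
      rw [div_mul_eq_mul_div, div_lt_iff₀ (by linarith)]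
      exact mul_lt_mul_of_pos_left (lt_add_one T) (sub_pos.2 hneg)
    linarith
  have hcont : ContinuousOn (fun p : ℝ × X ↦ u p + κ * p.1) (Icc 0 T ×ˢ K) :=
    (continuousOn_sum_mul_exp hφ a _).add (by fun_prop)
  obtain ⟨⟨t, x⟩, ⟨ht, hx⟩, hle⟩ := (isCompact_Icc.prod hK).exists_isMinOn
    ⟨(T, x₀), right_mem_Icc.2 hT, hx₀⟩ hcont
  have hval : u (t, x) + κ * t < -δ :=
    (hle (⟨right_mem_Icc.2 hT, hx₀⟩ : (T, x₀) ∈ Icc 0 T ×ˢ K)).trans_lt hκT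
  have htpos : 0 < t := by
    refine ht.1.lt_of_ne fun h ↦ hval.not_ge ?_
    subst h
    simpa [u] using h₀ x hx
  have hspace : IsMinOn (fun y ↦ u (t, y)) K x := fun y hy ↦ by
    simpa using hle (⟨ht, hy⟩ : (t, y) ∈ Icc 0 T ×ˢ K)
  have htime : IsMinOn (fun τ ↦ u (τ, x) + κ * τ) (Icc 0 t) t := fun τ hτ ↦
    hle (⟨⟨hτ.1, hτ.2.trans ht.2⟩, hx⟩ : (τ, x) ∈ Icc 0 T ×ˢ K)
  have hderiv_nonneg := hmin _ x hx hspace (by nlinarith : u (t, x) < 0)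
  have hderiv := (hasDerivAt_sum_mul_exp (S := S) (φ := φ) (μ := μ) a x t).add
    ((hasDerivAt_id t).const_mul κ)
  linarith [deriv_nonpos_of_isMinOn_Icc_right htpos hderiv htime]

end PositiveMinimumPrinciple

end MinimumPrinciple

/-! ### Eigenfunctions -/

section Modes

open Polynomial

/-- The eigenvalue of `-L + 4n(n+1)` with indices `(m, k)`. -/
noncomputable def hopfEigenvalue (n : ℕ) (q : ℕ × ℕ) : ℝ :=
  4 * (q.2 + n) * (q.2 + q.1 + n + 1)

/-- The radial part, in the variable `s = cos r`, of the eigenfunction with indices `(m, k)`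
multiplied by `s`: this is `s ^ (m + 1) * P_k^{(2n-1,m+1)}(2 s ^ 2 - 1)`. -/
noncomputable def hopfRadial (n : ℕ) (q : ℕ × ℕ) : ℝ[X] :=
  ∑ i ∈ Finset.range (q.2 + 1),
    monomial (q.1 + 1 + 2 * i) (jacobiCoeff q.2 (2 * n - 1) (q.1 + 1) i)

/-- The eigenfunction with indices `(m, k)` multiplied by `cos r * sin η`, as a function of
`(cos r, η)`. The factor removes the singularities of the operator at `η ∈ {0, π}`. -/
noncomputable def hopfMode (n : ℕ) (q : ℕ × ℕ) (p : ℝ × ℝ) : ℝ :=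
  (hopfRadial n q).eval p.1 * sin ((q.1 + 1) * p.2)

variable (n : ℕ) (q : ℕ × ℕ) (s : ℝ)

theorem eval_hopfRadial :
    (hopfRadial n q).eval s =
      s ^ (q.1 + 1) * (jacobiPoly q.2 (2 * n - 1) (q.1 + 1)).eval (s ^ 2) := by
  simp only [hopfRadial, eval_finsetSum, eval_monomial, eval_jacobiPoly, Finset.mul_sum, pow_add,
    pow_mul]
  exact Finset.sum_congr rfl fun i _ ↦ by ring

theorem eval_zero_hopfRadial : (hopfRadial n q).eval 0 = 0 := by
  simp [eval_hopfRadial]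

theorem mul_eval_derivative_monomial (e : ℕ) (c : ℝ) :
    s * (derivative (monomial e c)).eval s = e * (c * s ^ e) := by
  rcases e with _ | e
  · simp
  · simp only [derivative_monomial, eval_monomial, Nat.add_sub_cancel, pow_succ]
    ring

theorem sq_mul_eval_derivative_derivative_monomial (e : ℕ) (c : ℝ) :
    s ^ 2 * (derivative (derivative (monomial e c))).eval s = e * (e - 1) * (c * s ^ e) := by
  rcases e with _ | e
  · simp
  · have h := mul_eval_derivative_monomial s e (c * (e + 1 : ℕ))
    rw [derivative_monomial, Nat.add_sub_cancel, sq, mul_assoc, h]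
    push_cast
    ring

theorem eulerOperator_hopfRadial (a b : ℝ) :
    s ^ 2 * (derivative (derivative (hopfRadial n q))).eval s
        + a * (s * (derivative (hopfRadial n q)).eval s) + b * (hopfRadial n q).eval s =
      ∑ i ∈ Finset.range (q.2 + 1),
        (((q.1 + 1 + 2 * i : ℝ) * (q.1 + 2 * i) + a * (q.1 + 1 + 2 * i) + b) *
          jacobiCoeff q.2 (2 * n - 1) (q.1 + 1) i) * s ^ (q.1 + 1 + 2 * i) := by
  simp only [hopfRadial, derivative_sum, eval_finsetSum, Finset.mul_sum,
    sq_mul_eval_derivative_derivative_monomial, mul_eval_derivative_monomial, eval_monomial,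
    ← Finset.sum_add_distrib]
  refine Finset.sum_congr rfl fun i _ ↦ ?_
  push_cast
  ring

theorem hopfRadial_euler_eq {n : ℕ} (hn : 1 ≤ n) :
    s ^ 2 * (derivative (derivative (hopfRadial n q))).eval s
        + 1 * (s * (derivative (hopfRadial n q)).eval s)
        + -(q.1 + 1) ^ 2 * (hopfRadial n q).eval s =
      s ^ 2 * (s ^ 2 * (derivative (derivative (hopfRadial n q))).eval s
        + (4 * n + 1) * (s * (derivative (hopfRadial n q)).eval s)
        + (4 * n ^ 2 - (2 * q.2 + q.1 + 1 + 2 * n) ^ 2) * (hopfRadial n q).eval s) := by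
  rw [eulerOperator_hopfRadial, eulerOperator_hopfRadial, Finset.sum_range_succ',
    Finset.sum_range_succ, mul_add (s ^ 2), Finset.mul_sum]
  congr 1
  · refine Finset.sum_congr rfl fun i _ ↦ ?_
    have hrec := jacobiCoeff_succ_right q.2 (2 * n - 1) (q.1 + 1) i
    push_cast [Nat.cast_sub (show 1 ≤ 2 * n by omega)] at hrec ⊢
    linear_combination 4 * s ^ (q.1 + 1 + 2 * (i + 1)) * hrec
  · push_cast
    ring

theorem hopfRadial_ode {n : ℕ} (hn : 1 ≤ n) :
    (1 - s ^ 2) * (s ^ 2 * (derivative (derivative (hopfRadial n q))).eval s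
        + s * (derivative (hopfRadial n q)).eval s - (q.1 + 1) ^ 2 * (hopfRadial n q).eval s)
      - 4 * n * s ^ 3 * (derivative (hopfRadial n q)).eval s
      - 4 * n ^ 2 * s ^ 2 * (hopfRadial n q).eval s =
      -(s ^ 2 * (hopfEigenvalue n q * (hopfRadial n q).eval s)) := by
  rw [hopfEigenvalue]
  linear_combination hopfRadial_euler_eq q s hn

end Modes

section ModesMinimumPrinciple

open Polynomial

/-- The values of the coordinates `(cos r, η)`, boundary included. -/
def hopfDomain : Set (ℝ × ℝ) := Icc 0 1 ×ˢ Icc 0 π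

theorem isCompact_hopfDomain : IsCompact hopfDomain :=
  isCompact_Icc.prod isCompact_Icc

theorem continuous_hopfMode (n : ℕ) (q : ℕ × ℕ) : Continuous (hopfMode n q) := by
  unfold hopfMode
  fun_prop

theorem deriv_deriv_sum_mul_sin {ι : Type*} (S : Finset ι) (c ω : ι → ℝ) (θ : ℝ) :
    deriv (deriv fun x ↦ ∑ j ∈ S, c j * sin (ω j * x)) θ =
      -∑ j ∈ S, c j * ω j ^ 2 * sin (ω j * θ) := by
  have hfirst : deriv (fun x ↦ ∑ j ∈ S, c j * sin (ω j * x)) =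
      fun x ↦ ∑ j ∈ S, c j * ω j * cos (ω j * x) := by
    funext x
    refine (HasDerivAt.fun_sum fun j _ ↦ ?_).deriv
    exact (((hasDerivAt_id x).const_mul (ω j)).sin.const_mul (c j)).congr_deriv
      (by simp only [id]; ring)
  rw [hfirst, ← Finset.sum_neg_distrib]
  refine (HasDerivAt.fun_sum fun j _ ↦ ?_).deriv
  exact (((hasDerivAt_id θ).const_mul (ω j)).cos.const_mul (c j * ω j)).congr_deriv
    (by simp only [id]; ring)

/-- At `s = 1` the second-order term degenerates and the first derivative has the right sign. -/
theorem radialOperator_nonneg_of_isMinOn (n : ℕ) (p : ℝ[X]) {s : ℝ} (hs : s ∈ Ioc (0 : ℝ) 1)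
    (hmin : IsMinOn (fun x ↦ p.eval x) (Icc 0 1) s) :
    0 ≤ (1 - s ^ 2) * (s ^ 2 * (derivative (derivative p)).eval s + s * (derivative p).eval s)
      - 4 * n * s ^ 3 * (derivative p).eval s := by
  rcases hs.2.lt_or_eq with hlt | rfl
  · have hlocal : IsLocalMin (fun x ↦ p.eval x) s := hmin.isLocalMin (Icc_mem_nhds hs.1 hlt)
    have hfirst : (derivative p).eval s = 0 := hlocal.hasDerivAt_eq_zero (p.hasDerivAt s)
    have hsecond := second_deriv_nonneg_of_isLocalMin p.continuousAt hlocal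
    have hderiv : _root_.deriv (fun x ↦ p.eval x) = fun x ↦ (derivative p).eval x :=
      funext fun x ↦ p.deriv
    rw [hderiv, Polynomial.deriv] at hsecond
    rw [hfirst]
    have : 0 ≤ 1 - s ^ 2 := by nlinarith [hs.1, hs.2]
    simp only [mul_zero, add_zero, sub_zero]
    positivity
  · have := deriv_nonpos_of_isMinOn_Icc_right one_pos (p.hasDerivAt 1) hmin
    nlinarith [n.cast_nonneg (α := ℝ)]

variable {ι : Type*} {n : ℕ} (hn : 1 ≤ n) (S : Finset ι) (q : ι → ℕ × ℕ)
include hn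

theorem sum_hopfRadial_ode (c : ι → ℝ) (s : ℝ) {p : ℝ[X]}
    (hp : p = ∑ j ∈ S, C (c j) * hopfRadial n (q j)) :
    (1 - s ^ 2) * (s ^ 2 * (derivative (derivative p)).eval s + s * (derivative p).eval s
        - ∑ j ∈ S, c j * ((q j).1 + 1) ^ 2 * (hopfRadial n (q j)).eval s)
      - 4 * n * s ^ 3 * (derivative p).eval s - 4 * n ^ 2 * s ^ 2 * p.eval s =
      s ^ 2 * ∑ j ∈ S, c j * -hopfEigenvalue n (q j) * (hopfRadial n (q j)).eval s := by
  subst hp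
  simp only [derivative_sum, derivative_C_mul, eval_finsetSum, eval_mul, eval_C,
    Finset.mul_sum, ← Finset.sum_sub_distrib, ← Finset.sum_add_distrib]
  refine Finset.sum_congr rfl fun j _ ↦ ?_
  linear_combination c j * hopfRadial_ode (q j) s hn

theorem positiveMinimumPrinciple_hopfMode :
    PositiveMinimumPrinciple hopfDomain S (fun j ↦ hopfMode n (q j))
      fun j ↦ -hopfEigenvalue n (q j) := by
  rintro b ⟨s, θ⟩ ⟨hs, hθ⟩ hmin hneg
  simp only [hopfMode] at hneg hs hθ ⊢
  have hs₀ : 0 < s := hs.1.lt_of_ne fun h ↦ by simp [← h, eval_zero_hopfRadial] at hneg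
  have hθ₀ : 0 < θ := hθ.1.lt_of_ne fun h ↦ by simp [← h] at hneg
  have hθπ : θ < π := hθ.2.lt_of_ne fun h ↦ hneg.ne <| Finset.sum_eq_zero fun j _ ↦ by
    have := sin_nat_mul_pi ((q j).1 + 1)
    push_cast at this
    rw [h, this, mul_zero, mul_zero]
  have hangular : 0 ≤ -∑ j ∈ S, b j * (hopfRadial n (q j)).eval s * ((q j).1 + 1) ^ 2 *
      sin (((q j).1 + 1) * θ) := by
    rw [← deriv_deriv_sum_mul_sin]
    refine second_deriv_nonneg_of_isLocalMin (by fun_prop) ?_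
    filter_upwards [Icc_mem_nhds hθ₀ hθπ] with x hx
    simpa only [hopfMode, mem_ofPred_eq, mul_assoc] using hmin (⟨hs, hx⟩ : (s, x) ∈ hopfDomain)
  obtain ⟨p, hp⟩ : ∃ p, p = ∑ j ∈ S, C (b j * sin (((q j).1 + 1) * θ)) * hopfRadial n (q j) :=
    ⟨_, rfl⟩
  have hp_eval (x : ℝ) : p.eval x = ∑ j ∈ S, b j * hopfMode n (q j) (x, θ) := by
    simp only [hp, hopfMode, eval_finsetSum, eval_mul, eval_C]
    exact Finset.sum_congr rfl fun j _ ↦ by ring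
  have hradial := radialOperator_nonneg_of_isMinOn n p ⟨hs₀, hs.2⟩ fun x hx ↦ by
    simpa only [mem_ofPred_eq, hp_eval] using hmin (⟨hx, hθ⟩ : (x, θ) ∈ hopfDomain)
  have hode := sum_hopfRadial_ode hn S q _ s hp
  simp only [mul_assoc, mul_left_comm, mul_comm] at hangular hode ⊢
  have hs_sq : 0 ≤ 1 - s ^ 2 := by nlinarith [hs.1, hs.2]
  have hpotential : 0 ≤ 4 * (n : ℝ) ^ 2 * s ^ 2 * -p.eval s := by
    have : 0 ≤ -p.eval s := by rw [hp_eval]; exact (neg_pos.2 hneg).le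
    positivity
  refine nonneg_of_mul_nonneg_right ?_ (sq_pos_of_pos hs₀)
  rw [← hode]
  linarith [mul_nonneg hs_sq hangular]

end ModesMinimumPrinciple

/-! ### The heat evolution of monomials -/

section Evolution

/-- The monomial `s ^ (m + 1 + 2i) * sin ((m + 1)θ)` with indices `(m, i)`. -/
noncomputable def hopfMonomial (q : ℕ × ℕ) (p : ℝ × ℝ) : ℝ :=
  p.1 ^ (q.1 + 1 + 2 * q.2) * sin ((q.1 + 1) * p.2)

/-- The image at time `t` of `hopfMonomial q` under the semigroup with the eigenfunctions
`hopfMode n` and the eigenvalues `hopfEigenvalue n`. -/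
noncomputable def hopfEvolution (n : ℕ) (t : ℝ) (q : ℕ × ℕ) (p : ℝ × ℝ) : ℝ :=
  ∑ k ∈ Finset.range (q.2 + 1), monomialJacobiCoeff (2 * n - 1) (q.1 + 1) q.2 k *
    exp (-hopfEigenvalue n (q.1, k) * t) * hopfMode n (q.1, k) p

theorem hopfEvolution_zero (n : ℕ) (q : ℕ × ℕ) (p : ℝ × ℝ) :
    hopfEvolution n 0 q p = hopfMonomial q p := by
  have h := congrArg (Polynomial.eval (p.1 ^ 2))
    (sum_monomialJacobiCoeff_mul_jacobiPoly (2 * n - 1) (q.1 + 1) q.2)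
  simp only [Polynomial.eval_finsetSum, Polynomial.eval_mul, Polynomial.eval_C, Polynomial.eval_pow,
    Polynomial.eval_X] at h
  rw [hopfMonomial, pow_add, pow_mul, ← h, Finset.mul_sum, Finset.sum_mul, hopfEvolution]
  refine Finset.sum_congr rfl fun k _ ↦ ?_
  rw [hopfMode, eval_hopfRadial, mul_zero, exp_zero]
  ring

theorem continuous_hopfEvolution (n : ℕ) (q : ℕ × ℕ) (p : ℝ × ℝ) :
    Continuous fun t ↦ hopfEvolution n t q p := by
  unfold hopfEvolution
  fun_prop

theorem abs_hopfMonomial_le_one (q : ℕ × ℕ) {p : ℝ × ℝ} (hp : p ∈ hopfDomain) :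
    |hopfMonomial q p| ≤ 1 := by
  rw [hopfMonomial, abs_mul, abs_pow, abs_of_nonneg hp.1.1]
  exact mul_le_one₀ (pow_le_one₀ hp.1.1 hp.1.2) (abs_nonneg _) (abs_sin_le_one _)

variable {n : ℕ} (hn : 1 ≤ n) {t : ℝ} (ht : 0 ≤ t)
include hn ht

theorem neg_le_sum_mul_hopfEvolution {S : Finset (ℕ × ℕ)} {b : ℕ × ℕ → ℝ} {δ : ℝ} (hδ : 0 ≤ δ)
    (h₀ : ∀ p ∈ hopfDomain, -δ ≤ ∑ q ∈ S, b q * hopfMonomial q p) {p : ℝ × ℝ}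
    (hp : p ∈ hopfDomain) : -δ ≤ ∑ q ∈ S, b q * hopfEvolution n t q p := by
  let T : Finset ((_ : ℕ × ℕ) × ℕ) := S.sigma fun q ↦ Finset.range (q.2 + 1)
  let a : (_ : ℕ × ℕ) × ℕ → ℝ := fun j ↦
    b j.1 * monomialJacobiCoeff (2 * n - 1) (j.1.1 + 1) j.1.2 j.2
  have hsum (τ : ℝ) (y : ℝ × ℝ) : ∑ q ∈ S, b q * hopfEvolution n τ q y =
      ∑ j ∈ T, a j * exp (-hopfEigenvalue n (j.1.1, j.2) * τ) * hopfMode n (j.1.1, j.2) y := by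
    simp only [T, a, Finset.sum_sigma, hopfEvolution, Finset.mul_sum, mul_assoc]
  rw [hsum]
  refine (positiveMinimumPrinciple_hopfMode hn T fun j ↦ (j.1.1, j.2)).neg_le_sum_mul_exp
    isCompact_hopfDomain (fun j _ ↦ (continuous_hopfMode n _).continuousOn) hδ (fun y hy ↦ ?_)
    ht hp
  refine (h₀ y hy).trans_eq ?_
  have h := hsum 0 y
  simpa only [hopfEvolution_zero, mul_zero, exp_zero, mul_one] using h

theorem abs_hopfEvolution_le_one (q : ℕ × ℕ) {p : ℝ × ℝ} (hp : p ∈ hopfDomain) :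
    |hopfEvolution n t q p| ≤ 1 := by
  have hsign (b : ℝ) (hb : |b| = 1) : -1 ≤ b * hopfEvolution n t q p := by
    refine (neg_le_sum_mul_hopfEvolution hn ht (S := {q}) (b := fun _ ↦ b) zero_le_one
      (fun y hy ↦ ?_) hp).trans_eq (Finset.sum_singleton _ _)
    rw [Finset.sum_singleton]
    refine (abs_le.1 ?_).1
    rw [abs_mul, hb, one_mul]
    exact abs_hopfMonomial_le_one q hy
  exact abs_le.2 ⟨by linarith [hsign 1 (by simp)], by linarith [hsign (-1) (by simp)]⟩

theorem tsum_mul_hopfEvolution_nonneg {b : ℕ × ℕ → ℝ} (hb : Summable b)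
    (h₀ : ∀ p ∈ hopfDomain, 0 ≤ ∑' q, b q * hopfMonomial q p) {p : ℝ × ℝ} (hp : p ∈ hopfDomain) :
    0 ≤ ∑' q, b q * hopfEvolution n t q p := by
  have hle {c : ℝ} (q : ℕ × ℕ) (hc : |c| ≤ 1) : ‖b q * c‖ ≤ |b q| := by
    rw [norm_mul]
    exact mul_le_of_le_one_right (abs_nonneg _) hc
  have hfinite (S : Finset (ℕ × ℕ)) :
      -∑' q : {q // q ∉ S}, |b q| ≤ ∑ q ∈ S, b q * hopfEvolution n t q p := by
    refine neg_le_sum_mul_hopfEvolution hn ht (tsum_nonneg fun _ ↦ abs_nonneg _)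
      (fun y hy ↦ ?_) hp
    have hmono := hb.abs.of_norm_bounded fun q ↦ hle q (abs_hopfMonomial_le_one q hy)
    have htail : ∑' q : {q // q ∉ S}, b q * hopfMonomial q y ≤ ∑' q : {q // q ∉ S}, |b q| :=
      (hmono.subtype _).tsum_le_tsum
        (fun q ↦ (le_abs_self _).trans (hle q (abs_hopfMonomial_le_one q hy))) (hb.abs.subtype _)
    linarith [h₀ y hy, hmono.sum_add_tsum_subtype_compl S]
  have hevol := hb.abs.of_norm_bounded fun q ↦ hle q (abs_hopfEvolution_le_one hn ht q hp)
  have htail := (tendsto_tsum_compl_atTop_zero fun q ↦ |b q|).neg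
  rw [neg_zero] at htail
  exact le_of_tendsto_of_tendsto' htail hevol.hasSum hfinite

end Evolution

/-! ### The generating function -/

section GeneratingFunction

theorem injective_add_add_one : Function.Injective fun q : ℕ × ℕ ↦ (q.1 + 1 + q.2, q.2) := by
  rintro ⟨m, i⟩ ⟨m', i'⟩ h
  simp only [Prod.mk.injEq] at h ⊢
  omega

theorem hasSum_above_diagonal {f : ℕ × ℕ → ℝ} {x : ℝ} (hf : HasSum f x)
    (hsymm : ∀ a b, f (a, b) = f (b, a)) (hdiag : ∀ a, f (a, a) = 0) :
    HasSum (fun q : ℕ × ℕ ↦ f (q.1 + 1 + q.2, q.2)) (x / 2) := by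
  let g : ℕ × ℕ → ℝ := {p | p.2 < p.1}.indicator f
  have hg : Summable g := hf.summable.indicator _
  have hswap : ∑' p : ℕ × ℕ, g p.swap = ∑' p, g p := (Equiv.prodComm ℕ ℕ).tsum_eq g
  have hsplit (p : ℕ × ℕ) : f p = g p + g p.swap := by
    obtain ⟨a, b⟩ := p
    rcases lt_trichotomy a b with h | rfl | h
    · simp [g, h, h.le, hsymm a b]
    · simp [g, hdiag]
    · simp [g, h, h.le]
  have htotal : x = 2 * ∑' p, g p := by
    have hadd := hg.tsum_add ((Equiv.prodComm ℕ ℕ).summable_iff.2 hg)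
    rw [← hf.tsum_eq, tsum_congr hsplit]
    exact hadd.trans (by rw [two_mul]; congr 1)
  have hrange : ∀ p, p ∉ Set.range (fun q : ℕ × ℕ ↦ (q.1 + 1 + q.2, q.2)) → g p = 0 := by
    rintro ⟨a, b⟩ hp
    refine Set.indicator_of_notMem (s := {p : ℕ × ℕ | p.2 < p.1})
      (fun h : b < a ↦ hp ⟨(a - b - 1, b), ?_⟩) f
    simp only [Prod.mk.injEq, and_true]
    omega
  have hcomp : (fun q : ℕ × ℕ ↦ f (q.1 + 1 + q.2, q.2)) =
      g ∘ fun q : ℕ × ℕ ↦ (q.1 + 1 + q.2, q.2) := by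
    funext q
    exact (Set.indicator_of_mem (s := {p : ℕ × ℕ | p.2 < p.1})
      (show q.2 < q.1 + 1 + q.2 by omega) f).symm
  rw [hcomp, htotal, mul_div_cancel_left₀ _ two_ne_zero, injective_add_add_one.hasSum_iff hrange]
  exact hg.hasSum

theorem hasSum_prod_mul {ι κ : Type*} {f : ι → ℂ} {g : κ → ℂ} {x y : ℂ} (hf : HasSum f x)
    (hg : HasSum g y) : HasSum (fun p : ι × κ ↦ f p.1 * g p.2) (x * y) :=
  hf.mul hg (summable_mul_of_summable_norm hf.summable.norm hg.summable.norm)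

variable (N : ℕ)

theorem hasSum_mul_choose_mul_geometric {𝕜 : Type*} [NormedField 𝕜] [CompleteSpace 𝕜] {r : 𝕜}
    (hr : ‖r‖ < 1) :
    HasSum (fun a : ℕ ↦ (a * (a + N).choose N : 𝕜) * r ^ a)
      ((N + 1) * r / (1 - r) ^ (N + 2)) := by
  have h := (hasSum_choose_mul_geometric_of_norm_lt_one (N + 1) hr).mul_left ((N + 1) * r)
  rw [← hasSum_nat_add_iff' 1]
  simp only [Finset.range_one, Finset.sum_singleton, Nat.cast_zero, zero_mul, sub_zero]
  rw [← mul_one_div]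
  refine h.congr_fun fun a ↦ ?_
  have hchoose := congrArg (Nat.cast (R := 𝕜)) (Nat.choose_succ_right_eq (a + 1 + N) N)
  rw [Nat.add_sub_cancel, Nat.cast_mul, Nat.cast_mul] at hchoose
  rw [show a + (N + 1) = a + 1 + N by ring, pow_succ]
  push_cast at hchoose ⊢
  linear_combination -(r * r ^ a) * hchoose

theorem hasSum_sub_mul_choose_mul_geometric {ζ ξ : ℂ} (hζ : ‖ζ‖ < 1) (hξ : ‖ξ‖ < 1) :
    HasSum (fun p : ℕ × ℕ ↦ ((p.1 - p.2) * ((p.1 + N).choose N * (p.2 + N).choose N) : ℂ) *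
        (ζ ^ p.1 * ξ ^ p.2))
      ((N + 1) * (ζ - ξ) / ((1 - ζ) * (1 - ξ)) ^ (N + 2)) := by
  have hleft := hasSum_prod_mul (hasSum_mul_choose_mul_geometric N hζ)
    (hasSum_choose_mul_geometric_of_norm_lt_one N hξ)
  have hright := hasSum_prod_mul (hasSum_choose_mul_geometric_of_norm_lt_one N hζ)
    (hasSum_mul_choose_mul_geometric N hξ)
  have hvalue : (N + 1) * (ζ - ξ) / ((1 - ζ) * (1 - ξ)) ^ (N + 2) =
      (N + 1) * ζ / (1 - ζ) ^ (N + 2) * (1 / (1 - ξ) ^ (N + 1)) -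
        1 / (1 - ζ) ^ (N + 1) * ((N + 1) * ξ / (1 - ξ) ^ (N + 2)) := by
    have hζ' : 1 - ζ ≠ 0 := sub_ne_zero.2 (by rintro rfl; simp at hζ)
    have hξ' : 1 - ξ ≠ 0 := sub_ne_zero.2 (by rintro rfl; simp at hξ)
    rw [mul_pow, pow_succ _ (N + 1), pow_succ _ (N + 1)]
    field
  rw [hvalue]
  exact (hleft.sub hright).congr_fun fun p ↦ by ring

theorem one_sub_mul_exp_mul_one_sub_mul_exp_neg (s θ : ℝ) :
    (1 - (s : ℂ) * Complex.exp (θ * Complex.I)) *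
        (1 - (s : ℂ) * Complex.exp ((-θ : ℝ) * Complex.I)) =
      ((1 - 2 * s * cos θ + s ^ 2 : ℝ) : ℂ) := by
  rw [Complex.exp_mul_I, Complex.exp_mul_I]
  push_cast
  rw [Complex.cos_neg, Complex.sin_neg]
  linear_combination (s : ℂ) ^ 2 * Complex.sin_sq_add_cos_sq θ - (s : ℂ) ^ 2 *
    Complex.sin θ ^ 2 * Complex.I_sq

theorem mul_exp_sub_mul_exp_neg (s θ : ℝ) :
    (s : ℂ) * Complex.exp (θ * Complex.I) - s * Complex.exp ((-θ : ℝ) * Complex.I) =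
      ((2 * (s * sin θ) : ℝ) : ℂ) * Complex.I := by
  rw [Complex.exp_mul_I, Complex.exp_mul_I]
  push_cast
  rw [Complex.cos_neg, Complex.sin_neg]
  ring

theorem mul_exp_pow_mul_mul_exp_neg_pow (s θ : ℝ) (a b : ℕ) :
    ((s : ℂ) * Complex.exp (θ * Complex.I)) ^ a *
        ((s : ℂ) * Complex.exp ((-θ : ℝ) * Complex.I)) ^ b =
      ((s ^ (a + b) : ℝ) : ℂ) * Complex.exp (((a - b) * θ : ℝ) * Complex.I) := by
  rw [mul_pow, mul_pow, ← Complex.exp_nat_mul, ← Complex.exp_nat_mul, mul_mul_mul_comm,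
    ← pow_add, ← Complex.exp_add]
  push_cast
  ring_nf

theorem hasSum_sub_mul_choose_mul_sin {s : ℝ} (hs : |s| < 1) (θ : ℝ) :
    HasSum (fun p : ℕ × ℕ ↦ (((p.1 : ℝ) - p.2) * ((p.1 + N).choose N * (p.2 + N).choose N)) *
        (s ^ (p.1 + p.2) * sin ((p.1 - p.2) * θ)))
      (2 * (N + 1) * (s * sin θ) / (1 - 2 * s * cos θ + s ^ 2) ^ (N + 2)) := by
  have hnorm (x : ℝ) : ‖(s : ℂ) * Complex.exp (x * Complex.I)‖ < 1 := by
    simpa [Complex.norm_exp_ofReal_mul_I] using hs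
  have h := Complex.hasSum_im
    (hasSum_sub_mul_choose_mul_geometric N (hnorm θ) (hnorm (-θ)))
  have hvalue (A B : ℝ) : ((N + 1 : ℂ) * (((2 * A : ℝ) : ℂ) * Complex.I) / (B : ℂ) ^ (N + 2)).im =
      2 * (N + 1) * A / B ^ (N + 2) := by
    rw [show (N + 1 : ℂ) * (((2 * A : ℝ) : ℂ) * Complex.I) / (B : ℂ) ^ (N + 2) =
      ((2 * (N + 1) * A / B ^ (N + 2) : ℝ) : ℂ) * Complex.I by push_cast; ring,
      Complex.im_ofReal_mul, Complex.I_im, mul_one]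
  rw [one_sub_mul_exp_mul_one_sub_mul_exp_neg, mul_exp_sub_mul_exp_neg, hvalue] at h
  refine h.congr_fun fun p ↦ ?_
  rw [mul_exp_pow_mul_mul_exp_neg_pow, show (((p.1 : ℂ) - p.2) *
    ((p.1 + N).choose N * (p.2 + N).choose N)) =
    ((((p.1 : ℝ) - p.2) * ((p.1 + N).choose N * (p.2 + N).choose N) : ℝ) : ℂ) by push_cast; ring,
    Complex.im_ofReal_mul, Complex.im_ofReal_mul, Complex.exp_ofReal_mul_I_im]

/-- The Green function of the conformal sub-Laplacian, up to a constant and multiplied by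
`cos r * sin η`, as a function of `(cos r, η)`. -/
noncomputable def hopfGreen (n : ℕ) (p : ℝ × ℝ) : ℝ :=
  p.1 * sin p.2 / (1 - 2 * p.1 * cos p.2 + p.1 ^ 2) ^ (n + 1)

/-- The coefficients, indexed by `(m, i)`, of the expansion of `hopfGreen n` along
`hopfMonomial`. -/
noncomputable def greenCoeff (n : ℕ) (q : ℕ × ℕ) : ℝ :=
  (q.1 + 1) / n * ((q.1 + q.2 + n).choose (n - 1) * (q.2 + n - 1).choose (n - 1))

theorem greenCoeff_nonneg (n : ℕ) (q : ℕ × ℕ) : 0 ≤ greenCoeff n q := by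
  unfold greenCoeff
  positivity

theorem greenCoeff_succ (q : ℕ × ℕ) :
    greenCoeff (N + 1) q =
      (((q.1 + 1 + q.2 : ℕ) : ℝ) - q.2) *
        ((q.1 + 1 + q.2 + N).choose N * (q.2 + N).choose N) / (N + 1) := by
  rw [greenCoeff, Nat.add_sub_cancel, ← Nat.add_assoc, ← Nat.add_assoc, Nat.add_sub_cancel,
    show q.1 + q.2 + N + 1 = q.1 + 1 + q.2 + N by ring]
  push_cast
  ring

variable {n : ℕ} (hn : 1 ≤ n)
include hn

theorem hasSum_greenCoeff_mul_hopfMonomial {p : ℝ × ℝ} (hp : |p.1| < 1) :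
    HasSum (fun q ↦ greenCoeff n q * hopfMonomial q p) (hopfGreen n p) := by
  obtain ⟨N, rfl⟩ := Nat.exists_eq_add_of_le' hn
  have h := (hasSum_above_diagonal (hasSum_sub_mul_choose_mul_sin N hp p.2) (fun a b ↦ ?_)
    fun a ↦ by simp).div_const (N + 1 : ℝ)
  · rw [show 2 * ((N : ℝ) + 1) * (p.1 * sin p.2) / (1 - 2 * p.1 * cos p.2 + p.1 ^ 2) ^ (N + 2) /
      2 / (N + 1) = hopfGreen (N + 1) p by rw [hopfGreen]; field] at h
    refine h.congr_fun fun q ↦ ?_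
    rw [greenCoeff_succ, hopfMonomial, show q.1 + 1 + 2 * q.2 = q.1 + 1 + q.2 + q.2 by ring,
      show ((q.1 + 1 + q.2 : ℕ) : ℝ) - q.2 = q.1 + 1 by push_cast; ring]
    ring
  · rw [show ((b : ℝ) - a) * p.2 = -((a - b) * p.2) by ring, sin_neg, add_comm b a]
    ring

theorem summable_greenCoeff_mul_pow {z : ℝ} (hz : |z| < 1) :
    Summable fun q : ℕ × ℕ ↦ greenCoeff n q * z ^ (q.1 + 1 + 2 * q.2) := by
  obtain ⟨N, rfl⟩ := Nat.exists_eq_add_of_le' hn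
  have h := (hasSum_sub_mul_choose_mul_geometric N (ζ := z) (ξ := z) (by simpa using hz)
    (by simpa using hz)).summable.comp_injective injective_add_add_one
  rw [← Complex.summable_ofReal]
  refine (h.div_const (N + 1 : ℂ)).congr fun q ↦ ?_
  rw [greenCoeff_succ, show q.1 + 1 + 2 * q.2 = q.1 + 1 + q.2 + q.2 by ring]
  simp only [Function.comp_apply]
  push_cast
  ring

end GeneratingFunction

/-! ### Abel factors -/

section AbelFactor

/-- `(a + j)! (b + j)! / (j! (a + b + j)!)`, the `j`-th partial sum of `factorialRatioDiff a b`. -/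
noncomputable def factorialRatio (a b j : ℕ) : ℝ :=
  (a + j).factorial * (b + j).factorial / (j.factorial * (a + b + j).factorial)

/-- The difference of consecutive values of `factorialRatio a b`, in closed form. -/
noncomputable def factorialRatioDiff (a b j : ℕ) : ℝ :=
  a * b / ((a + j) * (b + j)) * factorialRatio a b j

/-- The power series with coefficients `factorialRatioDiff a b`; its value at `1` is `1`. -/
noncomputable def abelFactor (a b : ℕ) (x : ℝ) : ℝ :=
  ∑' j, factorialRatioDiff a b j * x ^ j

variable (a b j : ℕ)

theorem factorialRatio_nonneg : 0 ≤ factorialRatio a b j := by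
  unfold factorialRatio
  positivity

theorem factorialRatioDiff_nonneg : 0 ≤ factorialRatioDiff a b j := by
  have := factorialRatio_nonneg a b j
  unfold factorialRatioDiff
  positivity

theorem factorialRatio_zero_left : factorialRatio 0 b j = 1 := by
  unfold factorialRatio
  simp only [zero_add]
  field

theorem factorialRatio_succ_left :
    factorialRatio (a + 1) b j = factorialRatio a b j * (1 - b / (a + 1 + b + j)) := by
  unfold factorialRatio
  rw [show a + 1 + j = a + j + 1 by ring, show a + 1 + b + j = a + b + j + 1 by ring,
    Nat.factorial_succ (a + j), Nat.factorial_succ (a + b + j)]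
  push_cast
  have : (a : ℝ) + 1 + b + j ≠ 0 := by positivity
  have : (a : ℝ) + b + j + 1 ≠ 0 := by positivity
  field

theorem factorialRatio_le_one : factorialRatio a b j ≤ 1 := by
  induction a with
  | zero => rw [factorialRatio_zero_left]
  | succ a ih =>
    rw [factorialRatio_succ_left]
    have hle : (b : ℝ) / (a + 1 + b + j) ≤ 1 := div_le_one_of_le₀
      (by linarith [Nat.cast_nonneg (α := ℝ) a, Nat.cast_nonneg (α := ℝ) j]) (by positivity)
    have hnonneg : (0 : ℝ) ≤ b / (a + 1 + b + j) := by positivity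
    exact mul_le_one₀ ih (by linarith) (by linarith)

theorem tendsto_factorialRatio : Tendsto (factorialRatio a b) atTop (𝓝 1) := by
  induction a with
  | zero => exact tendsto_const_nhds.congr fun j ↦ (factorialRatio_zero_left b j).symm
  | succ a ih =>
    have hfactor : Tendsto (fun j : ℕ ↦ 1 - (b : ℝ) / (a + 1 + b + j)) atTop (𝓝 (1 - 0)) :=
      tendsto_const_nhds.sub (tendsto_const_nhds.div_atTop
        (tendsto_atTop_add_const_left _ _ tendsto_natCast_atTop_atTop))
    have h := ih.mul hfactor
    rw [sub_zero, mul_one] at h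
    exact h.congr fun j ↦ (factorialRatio_succ_left a b j).symm

theorem factorialRatioDiff_succ :
    factorialRatioDiff a b (j + 1) = factorialRatio a b (j + 1) - factorialRatio a b j := by
  unfold factorialRatioDiff factorialRatio
  rw [← add_assoc, ← add_assoc, ← add_assoc, Nat.factorial_succ (a + j), Nat.factorial_succ (b + j),
    Nat.factorial_succ (a + b + j), Nat.factorial_succ j]
  push_cast
  have : (a : ℝ) + b + j + 1 ≠ 0 := by positivity
  have : (a : ℝ) + (j + 1) ≠ 0 := by positivity
  have : (b : ℝ) + (j + 1) ≠ 0 := by positivity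
  field

theorem norm_factorialRatioDiff_mul_pow_le {x : ℝ} (hx : x ∈ Icc 0 1) :
    ‖factorialRatioDiff a b j * x ^ j‖ ≤ factorialRatioDiff a b j := by
  have hnonneg := factorialRatioDiff_nonneg a b j
  rw [norm_of_nonneg (mul_nonneg hnonneg (pow_nonneg hx.1 j))]
  exact mul_le_of_le_one_right hnonneg (pow_le_one₀ hx.1 hx.2)

variable {a b} (ha : a ≠ 0) (hb : b ≠ 0)
include ha hb

theorem factorialRatioDiff_zero : factorialRatioDiff a b 0 = factorialRatio a b 0 := by
  have : (a : ℝ) * b ≠ 0 := by positivity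
  rw [factorialRatioDiff, Nat.cast_zero, add_zero, add_zero, div_self this, one_mul]

theorem hasSum_factorialRatioDiff : HasSum (factorialRatioDiff a b) 1 := by
  rw [hasSum_iff_tendsto_nat_of_nonneg (factorialRatioDiff_nonneg a b),
    ← tendsto_add_atTop_iff_nat 1]
  refine (tendsto_factorialRatio a b).congr fun j ↦ ?_
  rw [Finset.sum_range_succ', factorialRatioDiff_zero ha hb]
  simp_rw [factorialRatioDiff_succ]
  rw [Finset.sum_range_sub, sub_add_cancel]

theorem hasSum_factorialRatioDiff_mul_pow {x : ℝ} (hx : x ∈ Icc 0 1) :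
    HasSum (fun j ↦ factorialRatioDiff a b j * x ^ j) (abelFactor a b x) :=
  (Summable.of_norm_bounded (hasSum_factorialRatioDiff ha hb).summable fun j ↦
    norm_factorialRatioDiff_mul_pow_le a b j hx).hasSum

theorem abelFactor_mem_Icc {x : ℝ} (hx : x ∈ Icc 0 1) : abelFactor a b x ∈ Icc 0 1 := by
  constructor
  · exact tsum_nonneg fun j ↦ mul_nonneg (factorialRatioDiff_nonneg a b j) (pow_nonneg hx.1 j)
  · exact hasSum_le (fun j ↦ (le_norm_self _).trans (norm_factorialRatioDiff_mul_pow_le a b j hx))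
      (hasSum_factorialRatioDiff_mul_pow ha hb hx) (hasSum_factorialRatioDiff ha hb)

theorem abelFactor_one : abelFactor a b 1 = 1 := by
  simp only [abelFactor, one_pow, mul_one, (hasSum_factorialRatioDiff ha hb).tsum_eq]

theorem continuousOn_abelFactor : ContinuousOn (abelFactor a b) (Icc 0 1) :=
  continuousOn_tsum (fun _ ↦ by fun_prop) (hasSum_factorialRatioDiff ha hb).summable
    fun j _ hx ↦ norm_factorialRatioDiff_mul_pow_le a b j hx

theorem hasSum_one_sub_mul_factorialRatio_mul_pow {x : ℝ} (hx : x ∈ Ico 0 1) :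
    HasSum (fun j ↦ (1 - x) * (factorialRatio a b j * x ^ j)) (abelFactor a b x) := by
  have hsummable : Summable fun j ↦ factorialRatio a b j * x ^ j := by
    refine (summable_geometric_of_lt_one hx.1 hx.2).of_nonneg_of_le (fun j ↦ ?_) fun j ↦ ?_
    · exact mul_nonneg (factorialRatio_nonneg a b j) (pow_nonneg hx.1 j)
    · exact mul_le_of_le_one_left (pow_nonneg hx.1 j) (factorialRatio_le_one a b j)
  obtain ⟨S, hS⟩ := hsummable
  have hdiff : HasSum (fun j ↦ factorialRatioDiff a b j * x ^ j) ((1 - x) * S) := by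
    rw [← hasSum_nat_add_iff' 1, Finset.sum_range_one, factorialRatioDiff_zero ha hb,
      show (1 - x) * S - factorialRatio a b 0 * x ^ 0 =
        S - factorialRatio a b 0 * x ^ 0 - x * S by ring]
    have hshift := (hasSum_nat_add_iff' 1).2 hS
    rw [Finset.sum_range_one] at hshift
    refine (hshift.sub (hS.mul_left x)).congr_fun fun j ↦ ?_
    rw [factorialRatioDiff_succ]
    ring
  rw [(hasSum_factorialRatioDiff_mul_pow ha hb ⟨hx.1, hx.2.le⟩).unique hdiff]
  exact hS.mul_left (1 - x)

end AbelFactor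

/-! ### Resummation of the regularized Green function -/

section Resummation

/-- The coefficient `4 n (2n - 1)! / (n!)² · (2k + m + 2n + 1) (m + 1) C(k + m + 2n, 2n - 1)` of the
mode `(m, k)`, proportional to the one of the heat kernel. The constant makes the Green function
with these coefficients equal to `hopfGreen n`. -/
noncomputable def heatCoeff (n : ℕ) (q : ℕ × ℕ) : ℝ :=
  4 * n * (2 * n - 1).factorial / n.factorial ^ 2 *
    ((2 * q.2 + q.1 + 2 * n + 1) * (q.1 + 1) * (q.2 + q.1 + 2 * n).choose (2 * n - 1))

theorem heatCoeff_nonneg (n : ℕ) (q : ℕ × ℕ) : 0 ≤ heatCoeff n q := by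
  unfold heatCoeff
  positivity

theorem tsum_sum_range_eq_tsum_tsum_add {ι : Type*} {f : ι → ℕ → ℕ → ℝ}
    (hf : Summable fun p : (ι × ℕ) × ℕ ↦ f p.1.1 (p.1.2 + p.2) p.1.2) :
    ∑' q : ι × ℕ, ∑ k ∈ Finset.range (q.2 + 1), f q.1 q.2 k =
      ∑' q : ι × ℕ, ∑' j, f q.1 (q.2 + j) q.2 := by
  let g : (ι × ℕ) × ℕ → ℝ := fun p ↦ if p.2 ≤ p.1.2 then f p.1.1 p.1.2 p.2 else 0
  let e : (ι × ℕ) × ℕ → (ι × ℕ) × ℕ := fun p ↦ ((p.1.1, p.1.2 + p.2), p.1.2)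
  have hinj : Function.Injective e := by
    rintro ⟨⟨m, k⟩, j⟩ ⟨⟨m', k'⟩, j'⟩ h
    simp only [e, Prod.mk.injEq] at h ⊢
    exact ⟨⟨h.1.1, h.2⟩, by omega⟩
  have hrange : ∀ p, p ∉ Set.range e → g p = 0 := by
    rintro ⟨⟨m, i⟩, k⟩ hp
    refine if_neg fun hki : k ≤ i ↦ hp ⟨((m, k), i - k), ?_⟩
    simp only [e, Nat.add_sub_cancel' hki]
  have hcomp : (fun p : (ι × ℕ) × ℕ ↦ f p.1.1 (p.1.2 + p.2) p.1.2) = g ∘ e :=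
    funext fun p ↦ (if_pos (Nat.le_add_right p.1.2 p.2)).symm
  have hg : HasSum g (∑' p : (ι × ℕ) × ℕ, f p.1.1 (p.1.2 + p.2) p.1.2) := by
    rw [← hinj.hasSum_iff hrange, ← hcomp]
    exact hf.hasSum
  have hfiber (q : ι × ℕ) :
      HasSum (fun k ↦ g (q, k)) (∑ k ∈ Finset.range (q.2 + 1), f q.1 q.2 k) := by
    rw [Finset.sum_congr rfl fun k hk ↦ (if_pos (Finset.mem_range_succ_iff.1 hk)).symm]
    exact hasSum_sum_of_ne_finset_zero fun k hk ↦ if_neg (by simpa [Nat.lt_succ_iff] using hk)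
  rw [(hg.prod_fiberwise hfiber).tsum_eq, hf.tsum_prod]

theorem greenCoeff_succ_eq_factorial (N m i : ℕ) :
    greenCoeff (N + 1) (m, i) = (m + 1) * ((m + i + N + 1).factorial * (i + N).factorial) /
      ((N + 1) * N.factorial ^ 2 * ((m + i + 1).factorial * i.factorial)) := by
  have hfst : ((m + 1 + i + N).choose N : ℝ) =
      (m + i + N + 1).factorial / (N.factorial * (m + i + 1).factorial) := by
    rw [show m + 1 + i + N = N + (m + i + 1) by ring, Nat.cast_add_choose,
      show N + (m + i + 1) = m + i + N + 1 by ring]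
  have hsnd : ((i + N).choose N : ℝ) = (i + N).factorial / (N.factorial * i.factorial) := by
    rw [add_comm i N, Nat.cast_add_choose]
  rw [greenCoeff_succ, hfst, hsnd]
  push_cast
  field

theorem heatCoeff_succ_eq_factorial (N m k : ℕ) :
    heatCoeff (N + 1) (m, k) = 4 * (m + 1) * (2 * k + m + 2 * N + 3) *
      (k + m + 2 * N + 2).factorial /
        ((N + 1) * N.factorial ^ 2 * (k + m + 1).factorial) := by
  have hchoose : ((k + m + 2 * (N + 1)).choose (2 * N + 1) : ℝ) =
      (k + m + 2 * N + 2).factorial / ((2 * N + 1).factorial * (k + m + 1).factorial) := by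
    rw [show k + m + 2 * (N + 1) = 2 * N + 1 + (k + m + 1) by ring, Nat.cast_add_choose,
      show 2 * N + 1 + (k + m + 1) = k + m + 2 * N + 2 by ring]
  rw [heatCoeff, show 2 * (N + 1) - 1 = 2 * N + 1 by omega, hchoose, Nat.factorial_succ N]
  push_cast
  field

variable {n : ℕ} (hn : 1 ≤ n)
include hn

theorem greenCoeff_mul_eq_greenCoeff_succ (q : ℕ × ℕ) :
    greenCoeff n q * ((q.2 + n) * (q.2 + q.1 + n + 1)) = n * (n + 1) * greenCoeff (n + 1) q := by
  obtain ⟨N, rfl⟩ := Nat.exists_eq_add_of_le' hn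
  obtain ⟨m, i⟩ := q
  rw [greenCoeff_succ_eq_factorial, greenCoeff_succ_eq_factorial, ← add_assoc, ← add_assoc,
    Nat.factorial_succ N, Nat.factorial_succ (i + N), Nat.factorial_succ (m + i + N + 1)]
  push_cast
  field

theorem greenCoeff_succ_mul_monomialJacobiCoeff (m k j : ℕ) :
    4 * n * (n + 1) * greenCoeff (n + 1) (m, k + j) *
        monomialJacobiCoeff (2 * n - 1) (m + 1) (k + j) k =
      heatCoeff n (m, k) * factorialRatio (k + n) (k + m + n + 1) j := by
  obtain ⟨N, rfl⟩ := Nat.exists_eq_add_of_le' hn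
  have hdesc : ((k + j).descFactorial k : ℝ) = (k + j).factorial / j.factorial := by
    rw [eq_div_iff (by positivity), mul_comm]
    have h := Nat.factorial_mul_descFactorial (Nat.le_add_right k j)
    rw [Nat.add_sub_cancel_left] at h
    exact_mod_cast h
  rw [greenCoeff_succ_eq_factorial, heatCoeff_succ_eq_factorial, monomialJacobiCoeff, hdesc,
    factorialRatio, show 2 * (N + 1) - 1 = 2 * N + 1 by omega,
    show k + (2 * N + 1) + (m + 1) = k + m + 2 * N + 2 by ring,
    show k + j + (m + 1) = m + (k + j) + 1 by ring, show k + (m + 1) = k + m + 1 by ring,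
    show k + j + k + (2 * N + 1) + (m + 1) + 1 = k + (N + 1) + (k + m + (N + 1) + 1) + j by ring,
    show m + (k + j) + (N + 1) + 1 = k + m + (N + 1) + 1 + j by ring,
    show k + j + (N + 1) = k + (N + 1) + j by ring, Nat.factorial_succ N]
  push_cast
  field

theorem hopfEigenvalue_pos (q : ℕ × ℕ) : 0 < hopfEigenvalue n q := by
  have : (1 : ℝ) ≤ n := by exact_mod_cast hn
  unfold hopfEigenvalue
  positivity

theorem greenCoeff_mul_monomialJacobiCoeff (m k j : ℕ) :
    greenCoeff n (m, k + j) * monomialJacobiCoeff (2 * n - 1) (m + 1) (k + j) k =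
      heatCoeff n (m, k) / hopfEigenvalue n (m, k) *
        factorialRatioDiff (k + n) (k + m + n + 1) j := by
  have hup := greenCoeff_mul_eq_greenCoeff_succ hn (m, k + j)
  have hcoeff := greenCoeff_succ_mul_monomialJacobiCoeff hn m k j
  have : (1 : ℝ) ≤ n := by exact_mod_cast hn
  rw [factorialRatioDiff, hopfEigenvalue]
  push_cast at hup ⊢
  field_simp
  linear_combination hcoeff +
    4 * monomialJacobiCoeff (2 * n - 1) (m + 1) (k + j) k * hup

end Resummation

/-! ### Absolute convergence at positive times -/

section HeatSummability

theorem summable_pow_mul_exp_neg_mul_sq {c t : ℝ} (hc : 0 < c) (ht : 0 < t) :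
    Summable fun k : ℕ ↦ c ^ k * exp (-(t * k ^ 2)) := by
  have hgeom : Summable fun k : ℕ ↦ exp ((log c + 1) ^ 2 / (4 * t)) * exp (-1) ^ k :=
    (summable_geometric_of_lt_one (exp_pos _).le (exp_lt_one_iff.2 (by norm_num))).mul_left _
  refine hgeom.of_nonneg_of_le (fun k ↦ by positivity) fun k ↦ ?_
  have hsquare : (log c + 1) * k - t * k ^ 2 ≤ (log c + 1) ^ 2 / (4 * t) := by
    rw [le_div_iff₀ (by positivity)]
    linarith [sq_nonneg (log c + 1 - 2 * t * k)]
  calc c ^ k * exp (-(t * k ^ 2)) = exp (log c * k - t * k ^ 2) := by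
        rw [sub_eq_add_neg, exp_add, mul_comm (log c), exp_nat_mul, exp_log hc]
    _ ≤ exp ((log c + 1) ^ 2 / (4 * t) + k * -1) := by gcongr; linarith
    _ = exp ((log c + 1) ^ 2 / (4 * t)) * exp (-1) ^ k := by rw [exp_add, exp_nat_mul]

theorem mul_le_exp_mul (x u : ℝ) : u * x ≤ exp (x * u) := by
  linarith [add_one_le_exp (x * u)]

theorem heatCoeff_mul_pow_le_exp {x : ℝ} (hx : 0 < x) (n : ℕ) (q : ℕ × ℕ) :
    heatCoeff n q * (x * x * x ^ (2 * n - 1)) ≤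
      4 * n * (2 * n - 1).factorial / n.factorial ^ 2 *
        exp (x * (3 * q.2 + 3 * q.1 + 4 * n + 2)) := by
  have hchoose := choose_mul_pow_le_exp hx (q.2 + q.1 + 2 * n) (2 * n - 1)
  push_cast at hchoose
  rw [heatCoeff, mul_assoc]
  gcongr
  calc ((2 * q.2 + q.1 + 2 * n + 1 : ℝ) * (q.1 + 1) * (q.2 + q.1 + 2 * n).choose (2 * n - 1)) *
        (x * x * x ^ (2 * n - 1))
      = ((2 * q.2 + q.1 + 2 * n + 1) * x) * ((q.1 + 1) * x) *
        ((q.2 + q.1 + 2 * n).choose (2 * n - 1) * x ^ (2 * n - 1)) := by ring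
    _ ≤ exp (x * (2 * q.2 + q.1 + 2 * n + 1)) * exp (x * (q.1 + 1)) *
        exp (x * (q.2 + q.1 + 2 * n)) := by gcongr <;> exact mul_le_exp_mul _ _
    _ = exp (x * (3 * q.2 + 3 * q.1 + 4 * n + 2)) := by rw [← exp_add, ← exp_add]; ring_nf

theorem abs_hopfMode_mul_pow_le_exp {x : ℝ} (hx : 0 < x) (n : ℕ) (q : ℕ × ℕ) {p : ℝ × ℝ}
    (hp : p ∈ hopfDomain) :
    |hopfMode n q p| * (x * x ^ q.2) ≤ exp (x * (4 * q.2 + 2 * q.1 + 2 * n + 3)) := by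
  have hpoly := abs_eval_jacobiPoly_mul_pow_le hx q.2 (2 * n - 1) (q.1 + 1)
    (ρ := p.1 ^ 2) ⟨sq_nonneg _, pow_le_one₀ hp.1.1 hp.1.2⟩
  have hmode : |hopfMode n q p| ≤ |(jacobiPoly q.2 (2 * n - 1) (q.1 + 1)).eval (p.1 ^ 2)| := by
    rw [hopfMode, eval_hopfRadial, abs_mul, abs_mul, abs_pow, abs_of_nonneg hp.1.1]
    exact mul_le_of_le_one_right (abs_nonneg _) (abs_sin_le_one _) |>.trans' <| by
      gcongr
      exact mul_le_of_le_one_left (abs_nonneg _) (pow_le_one₀ hp.1.1 hp.1.2)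
  have hcast : ((2 * n - 1 : ℕ) : ℝ) ≤ 2 * n := by exact_mod_cast Nat.sub_le (2 * n) 1
  push_cast at hpoly
  calc |hopfMode n q p| * (x * x ^ q.2)
      ≤ |(jacobiPoly q.2 (2 * n - 1) (q.1 + 1)).eval (p.1 ^ 2)| * (x * x ^ q.2) := by gcongr
    _ = |(jacobiPoly q.2 (2 * n - 1) (q.1 + 1)).eval (p.1 ^ 2)| * x ^ q.2 * x := by ring
    _ ≤ (q.2 + 1) * exp (x * (3 * q.2 + (2 * n - 1 : ℕ) + 2 * (q.1 + 1))) * x := by gcongr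
    _ = ((q.2 + 1) * x) * exp (x * (3 * q.2 + (2 * n - 1 : ℕ) + 2 * (q.1 + 1))) := by ring
    _ ≤ exp (x * (q.2 + 1)) * exp (x * (3 * q.2 + 2 * n + 2 * (q.1 + 1))) := by
        gcongr
        exact mul_le_exp_mul _ _
    _ = exp (x * (4 * q.2 + 2 * q.1 + 2 * n + 3)) := by rw [← exp_add]; ring_nf

variable {n : ℕ} (hn : 1 ≤ n)
include hn

theorem four_mul_sq_add_add_one_le_hopfEigenvalue (q : ℕ × ℕ) :
    4 * ((q.2 : ℝ) ^ 2 + q.1) + 1 ≤ hopfEigenvalue n q := by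
  have : (1 : ℝ) ≤ n := by exact_mod_cast hn
  rw [hopfEigenvalue]
  nlinarith [mul_nonneg q.2.cast_nonneg' q.1.cast_nonneg' (α := ℝ)]

theorem exists_heatCoeff_mul_exp_mul_abs_hopfMode_le {t : ℝ} (ht : 0 < t) {p : ℝ × ℝ}
    (hp : p ∈ hopfDomain) :
    ∃ K, ∃ c > 0, ∀ q, heatCoeff n q * exp (-hopfEigenvalue n q * t) * |hopfMode n q p| ≤
      K * (exp (-t) ^ q.1 * (c ^ q.2 * exp (-(4 * t * q.2 ^ 2)))) := by
  obtain ⟨x, hx, rfl⟩ : ∃ x, 0 < x ∧ t = 2 * x := ⟨t / 2, by positivity, by ring⟩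
  let A : ℝ := 4 * n * (2 * n - 1).factorial / n.factorial ^ 2
  refine ⟨A * exp (x * (6 * n + 5)) / (x * x * x ^ (2 * n - 1) * x), exp (7 * x) / x,
    by positivity, fun q ↦ ?_⟩
  have hcoeff := heatCoeff_mul_pow_le_exp hx n q
  have hmode := abs_hopfMode_mul_pow_le_exp hx n q hp
  have hexp : exp (-hopfEigenvalue n q * (2 * x)) ≤
      exp (-(8 * x * q.2 ^ 2) + q.1 * -(2 * x) - 5 * x * q.1) := by
    gcongr
    nlinarith [four_mul_sq_add_add_one_le_hopfEigenvalue hn q]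
  rw [div_pow, div_mul_eq_mul_div (exp (7 * x) ^ q.2), mul_div_assoc', div_mul_div_comm,
    le_div_iff₀ (by positivity)]
  calc heatCoeff n q * exp (-hopfEigenvalue n q * (2 * x)) * |hopfMode n q p| *
        (x * x * x ^ (2 * n - 1) * x * x ^ q.2)
      = heatCoeff n q * (x * x * x ^ (2 * n - 1)) * (|hopfMode n q p| * (x * x ^ q.2)) *
        exp (-hopfEigenvalue n q * (2 * x)) := by ring
    _ ≤ A * exp (x * (3 * q.2 + 3 * q.1 + 4 * n + 2)) *
        exp (x * (4 * q.2 + 2 * q.1 + 2 * n + 3)) *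
        exp (-(8 * x * q.2 ^ 2) + q.1 * -(2 * x) - 5 * x * q.1) := by gcongr
    _ = A * exp (x * (6 * n + 5) +
          (q.1 * -(2 * x) + (q.2 * (7 * x) + -(4 * (2 * x) * q.2 ^ 2)))) := by
        rw [mul_assoc A, mul_assoc A, ← exp_add, ← exp_add]
        ring_nf
    _ = A * exp (x * (6 * n + 5)) *
          (exp (-(2 * x)) ^ q.1 * (exp (7 * x) ^ q.2 * exp (-(4 * (2 * x) * q.2 ^ 2)))) := by
        rw [exp_add, exp_add, exp_add, exp_nat_mul, exp_nat_mul, mul_assoc A]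

theorem summable_heatCoeff_mul_exp_mul_abs_hopfMode {t : ℝ} (ht : 0 < t) {p : ℝ × ℝ}
    (hp : p ∈ hopfDomain) :
    Summable fun q ↦ heatCoeff n q * exp (-hopfEigenvalue n q * t) * |hopfMode n q p| := by
  obtain ⟨K, c, hc, hle⟩ := exists_heatCoeff_mul_exp_mul_abs_hopfMode_le hn ht hp
  have hgeom : Summable fun m : ℕ ↦ exp (-t) ^ m :=
    summable_geometric_of_lt_one (exp_pos _).le (exp_lt_one_iff.2 (by linarith))
  have hgauss := summable_pow_mul_exp_neg_mul_sq hc (t := 4 * t) (by positivity)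
  refine ((hgeom.mul_of_nonneg hgauss (fun m ↦ ?_) fun k ↦ ?_).mul_left K).of_nonneg_of_le
    (fun q ↦ ?_) hle
  · exact pow_nonneg (exp_pos _).le m
  · exact mul_nonneg (pow_nonneg hc.le k) (exp_pos _).le
  · have := heatCoeff_nonneg n q
    positivity

end HeatSummability

/-! ### Integrals of exponential series -/

section ExpSeries

theorem norm_mul_exp_neg_mul_le {δ μ ε t : ℝ} (hμ : δ ≤ μ) (ht : ε ≤ t) (a : ℝ) :
    ‖a * exp (-μ * t)‖ ≤ exp (-δ * t) * (exp (δ * ε) * ‖a * exp (-μ * ε)‖) := by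
  simp only [norm_mul, norm_eq_abs, abs_exp]
  rw [mul_left_comm (exp (δ * ε)), mul_left_comm (exp (-δ * t)), ← exp_add, ← exp_add]
  gcongr
  linarith [mul_nonneg (sub_nonneg.2 hμ) (sub_nonneg.2 ht)]

variable {ι : Type*} {a μ : ι → ℝ} {δ ε : ℝ} (hδ : 0 < δ) (hμ : ∀ i, δ ≤ μ i)
  (ha : Summable fun i ↦ a i * exp (-μ i * ε))
include hδ hμ ha

theorem continuousOn_tsum_mul_exp_neg_mul :
    ContinuousOn (fun t ↦ ∑' i, a i * exp (-μ i * t)) (Ici ε) := by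
  refine continuousOn_tsum (fun i ↦ by fun_prop) ha.norm fun i t ht ↦ ?_
  refine (norm_mul_exp_neg_mul_le (hμ i) ht (a i)).trans ?_
  rw [← mul_assoc, ← exp_add]
  refine mul_le_of_le_one_left (norm_nonneg _) (exp_le_one_iff.2 ?_)
  linarith [mul_nonneg hδ.le (sub_nonneg.2 ht)]

theorem integrableOn_tsum_mul_exp_neg_mul :
    IntegrableOn (fun t ↦ ∑' i, a i * exp (-μ i * t)) (Ioi ε) := by
  have hbound : IntegrableOn
      (fun t ↦ exp (-δ * t) * ∑' i, exp (δ * ε) * ‖a i * exp (-μ i * ε)‖) (Ioi ε) :=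
    (integrableOn_exp_mul_Ioi (neg_neg_of_pos hδ) ε).mul_const _
  refine hbound.mono' (((continuousOn_tsum_mul_exp_neg_mul hδ hμ ha).mono
    Ioi_subset_Ici_self).aestronglyMeasurable measurableSet_Ioi) ?_
  refine ae_restrict_of_forall_mem measurableSet_Ioi fun t ht ↦ ?_
  exact tsum_of_norm_bounded ((ha.norm.mul_left _).hasSum.mul_left _)
    fun i ↦ norm_mul_exp_neg_mul_le (hμ i) (mem_Ioi.1 ht).le (a i)

theorem integral_tsum_mul_exp_neg_mul [Countable ι] :
    ∫ t in Ioi ε, ∑' i, a i * exp (-μ i * t) = ∑' i, a i / μ i * exp (-μ i * ε) := by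
  have hterm (i : ι) (c : ℝ) :
      ∫ t in Ioi ε, c * exp (-μ i * t) = c / μ i * exp (-μ i * ε) := by
    rw [integral_const_mul, integral_exp_mul_Ioi (by linarith [hμ i]), neg_div_neg_eq]
    ring
  have hnorm : Summable fun i ↦ ∫ t in Ioi ε, ‖a i * exp (-μ i * t)‖ := by
    refine (ha.norm.mul_left δ⁻¹).of_nonneg_of_le (fun i ↦ by positivity) fun i ↦ ?_
    simp only [norm_mul, norm_eq_abs, abs_exp]
    rw [hterm, div_eq_inv_mul, mul_assoc]
    gcongr
    exact hμ i
  rw [← integral_tsum_of_summable_integral_norm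
    (fun i ↦ (integrableOn_exp_mul_Ioi (by linarith [hμ i]) ε).const_mul (a i)) hnorm]
  exact tsum_congr fun i ↦ hterm i (a i)

end ExpSeries

/-! ### Series of eigenfunctions -/

section HopfSeries

/-- The solution at time `t` of the heat equation of `-L + 4n(n+1)` with coefficients `w` along
the eigenfunctions `hopfMode n`. -/
noncomputable def hopfSeries (n : ℕ) (w : ℕ × ℕ → ℝ) (t : ℝ) (p : ℝ × ℝ) : ℝ :=
  ∑' q, w q * hopfMode n q p * exp (-hopfEigenvalue n q * t)

theorem norm_mul_hopfMode_mul_exp_le {n : ℕ} {q : ℕ × ℕ} {w : ℝ} (hw : |w| ≤ heatCoeff n q)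
    (t : ℝ) (p : ℝ × ℝ) :
    ‖w * hopfMode n q p * exp (-hopfEigenvalue n q * t)‖ ≤
      heatCoeff n q * exp (-hopfEigenvalue n q * t) * |hopfMode n q p| := by
  rw [norm_mul, norm_mul, norm_eq_abs, norm_eq_abs, norm_eq_abs, abs_exp, mul_right_comm]
  gcongr

variable {n : ℕ} (hn : 1 ≤ n)
include hn

theorem one_le_hopfEigenvalue (q : ℕ × ℕ) : 1 ≤ hopfEigenvalue n q :=
  (four_mul_sq_add_add_one_le_hopfEigenvalue hn q).trans' (le_add_of_nonneg_left (by positivity))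

theorem abs_div_hopfEigenvalue_le {q : ℕ × ℕ} {w : ℝ} (hw : |w| ≤ heatCoeff n q) :
    |w / hopfEigenvalue n q| ≤ heatCoeff n q := by
  rw [abs_div, abs_of_pos (hopfEigenvalue_pos hn q)]
  exact (div_le_self (abs_nonneg _) (one_le_hopfEigenvalue hn q)).trans hw

variable {p : ℝ × ℝ} (hp : p ∈ hopfDomain) {t : ℝ} (ht : 0 < t)
include hp ht

theorem tendsto_hopfSeries {α : Type*} {l : Filter α} {w : α → ℕ × ℕ → ℝ} {w₀ : ℕ × ℕ → ℝ}
    (hw : ∀ᶠ z in l, ∀ q, |w z q| ≤ heatCoeff n q)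
    (hlim : ∀ q, Tendsto (fun z ↦ w z q) l (𝓝 (w₀ q))) :
    Tendsto (fun z ↦ hopfSeries n (w z) t p) l (𝓝 (hopfSeries n w₀ t p)) := by
  refine tendsto_tsum_of_dominated_convergence
    (summable_heatCoeff_mul_exp_mul_abs_hopfMode hn ht hp)
    (fun q ↦ ((hlim q).mul_const _).mul_const _)
    (hw.mono fun z hz q ↦ norm_mul_hopfMode_mul_exp_le (hz q) t p)

variable {w : ℕ × ℕ → ℝ} (hw : ∀ q, |w q| ≤ heatCoeff n q)
include hw

theorem summable_mul_hopfMode_mul_exp :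
    Summable fun q ↦ w q * hopfMode n q p * exp (-hopfEigenvalue n q * t) :=
  (summable_heatCoeff_mul_exp_mul_abs_hopfMode hn ht hp).of_norm_bounded fun q ↦
    norm_mul_hopfMode_mul_exp_le (hw q) t p

theorem integrableOn_hopfSeries : IntegrableOn (fun τ ↦ hopfSeries n w τ p) (Ioi t) :=
  integrableOn_tsum_mul_exp_neg_mul one_pos (one_le_hopfEigenvalue hn)
    (summable_mul_hopfMode_mul_exp hn hp ht hw)

theorem integral_hopfSeries :
    ∫ τ in Ioi t, hopfSeries n w τ p = hopfSeries n (fun q ↦ w q / hopfEigenvalue n q) t p := by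
  refine (integral_tsum_mul_exp_neg_mul one_pos (one_le_hopfEigenvalue hn)
    (summable_mul_hopfMode_mul_exp hn hp ht hw)).trans (tsum_congr fun q ↦ ?_)
  rw [mul_div_right_comm]

theorem tsum_mul_hopfEvolution_eq_hopfSeries {c : ℕ × ℕ → ℝ} {ρ : ℕ × ℕ → ℕ → ℝ} {z : ℝ}
    (hz : z ∈ Ico 0 1) (hρ : ∀ q j, |ρ q j| ≤ 1)
    (hc : ∀ m k j, c (m, k + j) * monomialJacobiCoeff (2 * n - 1) (m + 1) (k + j) k =
      w (m, k) * ρ (m, k) j) :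
    ∑' q, c q * z ^ (n + q.1 + 1 + 2 * q.2) * hopfEvolution n t q p =
      hopfSeries n (fun q ↦ w q * (∑' j, ρ q j * (z ^ 2) ^ j) * z ^ (n + q.1 + 1 + 2 * q.2))
        t p := by
  let f (m i k : ℕ) : ℝ := c (m, i) * z ^ (n + m + 1 + 2 * i) *
    (monomialJacobiCoeff (2 * n - 1) (m + 1) i k *
      exp (-hopfEigenvalue n (m, k) * t) * hopfMode n (m, k) p)
  have hf (m k j : ℕ) : f m (k + j) k =
      z ^ (n + m + 1 + 2 * k) *
        (w (m, k) * hopfMode n (m, k) p * exp (-hopfEigenvalue n (m, k) * t)) *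
        (ρ (m, k) j * (z ^ 2) ^ j) := by
    rw [show f m (k + j) k = c (m, k + j) * monomialJacobiCoeff (2 * n - 1) (m + 1) (k + j) k *
      (z ^ (n + m + 1 + 2 * (k + j)) *
        (exp (-hopfEigenvalue n (m, k) * t) * hopfMode n (m, k) p)) by ring, hc]
    ring
  have hz_sq : z ^ 2 < 1 := pow_lt_one₀ hz.1 hz.2 two_ne_zero
  have hsummable : Summable fun r : (ℕ × ℕ) × ℕ ↦ f r.1.1 (r.1.2 + r.2) r.1.2 := by
    refine ((summable_mul_hopfMode_mul_exp hn hp ht hw).abs.mul_of_nonneg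
      (summable_geometric_of_lt_one (sq_nonneg z) hz_sq) (fun _ ↦ abs_nonneg _)
      fun j ↦ pow_nonneg (sq_nonneg z) j).of_norm_bounded fun r ↦ ?_
    rw [hf, norm_mul, norm_mul, norm_mul (ρ _ _), norm_of_nonneg (pow_nonneg hz.1 _),
      norm_of_nonneg (pow_nonneg (sq_nonneg z) _)]
    gcongr
    · exact mul_le_of_le_one_left (norm_nonneg _) (pow_le_one₀ hz.1 hz.2.le)
    · exact mul_le_of_le_one_left (by positivity) (hρ _ _)
  calc ∑' q, c q * z ^ (n + q.1 + 1 + 2 * q.2) * hopfEvolution n t q p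
      = ∑' q : ℕ × ℕ, ∑ k ∈ Finset.range (q.2 + 1), f q.1 q.2 k := by
        simp only [hopfEvolution, Finset.mul_sum, f]
    _ = ∑' q : ℕ × ℕ, ∑' j, f q.1 (q.2 + j) q.2 := tsum_sum_range_eq_tsum_tsum_add hsummable
    _ = _ := tsum_congr fun q ↦ by
        simp only [hf, tsum_mul_left]
        ring

end HopfSeries

/-! ### Abel regularization -/

section Regularization

/-- The coefficient of the mode `q` in the heat kernel regularized by the parameter `z < 1`,
proportional to `heatCoeff n q` and equal to it at `z = 1`. -/
noncomputable def regularizedWeight (n : ℕ) (z : ℝ) (q : ℕ × ℕ) : ℝ :=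
  heatCoeff n q * abelFactor (q.2 + n) (q.2 + q.1 + n + 1) (z ^ 2) * z ^ (n + q.1 + 1 + 2 * q.2)

/-- The integral over `[t, ∞)` of the heat kernel with coefficients `regularizedWeight n z`. -/
noncomputable def regularizedGreen (n : ℕ) (z t : ℝ) (p : ℝ × ℝ) : ℝ :=
  ∑' q, greenCoeff n q * z ^ (n + q.1 + 1 + 2 * q.2) * hopfEvolution n t q p

theorem one_sub_two_mul_mul_cos_add_sq_pos {x : ℝ} (hx : |x| < 1) (θ : ℝ) :
    0 < 1 - 2 * x * cos θ + x ^ 2 := by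
  have hle : x * cos θ ≤ |x| := (le_abs_self _).trans <| by
    rw [abs_mul]
    exact mul_le_of_le_one_right (abs_nonneg x) (abs_cos_le_one θ)
  nlinarith [sq_pos_of_pos (sub_pos.2 hx), sq_abs x]

theorem abs_mul_fst_lt_one {z : ℝ} (hz : z ∈ Ico 0 1) {p : ℝ × ℝ} (hp : p ∈ hopfDomain) :
    |z * p.1| < 1 := by
  rw [abs_of_nonneg (mul_nonneg hz.1 hp.1.1)]
  exact mul_lt_one_of_nonneg_of_lt_one_left hz.1 hz.2 hp.1.2

theorem hopfGreen_nonneg (n : ℕ) {p : ℝ × ℝ} (hp : p ∈ hopfDomain) : 0 ≤ hopfGreen n p := by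
  have := hp.1.1
  have := sin_nonneg_of_mem_Icc hp.2
  have : 0 ≤ 1 - 2 * p.1 * cos p.2 + p.1 ^ 2 := by
    nlinarith [sq_nonneg (p.1 - cos p.2), cos_sq_le_one p.2]
  unfold hopfGreen
  positivity

/-- The factor `z ^ n` makes the regularization monotone: `z / (1 - 2 z x + z²)` increases. -/
theorem pow_mul_hopfGreen_le_pow_mul_hopfGreen (n : ℕ) {y z : ℝ} (hy : y ∈ Ico 0 1)
    (hz : z ∈ Icc y 1) {p : ℝ × ℝ} (hp : p ∈ hopfDomain)
    (hpos : 0 < 1 - 2 * (z * p.1) * cos p.2 + (z * p.1) ^ 2) :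
    y ^ n * hopfGreen n (y * p.1, p.2) ≤ z ^ n * hopfGreen n (z * p.1, p.2) := by
  have hy_pos := one_sub_two_mul_mul_cos_add_sq_pos (abs_mul_fst_lt_one hy hp) p.2
  have hcross : 0 ≤ (z - y) * (1 - (y * p.1) * (z * p.1)) := by
    refine mul_nonneg (sub_nonneg.2 hz.1) (sub_nonneg.2 (mul_le_one₀ ?_ ?_ ?_))
    · exact mul_le_one₀ hy.2.le hp.1.1 hp.1.2
    · exact mul_nonneg (hy.1.trans hz.1) hp.1.1
    · exact mul_le_one₀ hz.2 hp.1.1 hp.1.2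
  have hratio : y / (1 - 2 * (y * p.1) * cos p.2 + (y * p.1) ^ 2) ≤
      z / (1 - 2 * (z * p.1) * cos p.2 + (z * p.1) ^ 2) := by
    rw [div_le_div_iff₀ hy_pos hpos]
    linarith
  have hfactor (x : ℝ) : x ^ n * hopfGreen n (x * p.1, p.2) =
      (x / (1 - 2 * (x * p.1) * cos p.2 + (x * p.1) ^ 2)) ^ (n + 1) * (p.1 * sin p.2) := by
    rw [hopfGreen, div_pow]
    ring
  rw [hfactor, hfactor]
  have := div_nonneg hy.1 hy_pos.le
  have := mul_nonneg hp.1.1 (sin_nonneg_of_mem_Icc hp.2)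
  gcongr

theorem hopfMonomial_mul_fst (z : ℝ) (q : ℕ × ℕ) (p : ℝ × ℝ) :
    hopfMonomial q (z * p.1, p.2) = z ^ (q.1 + 1 + 2 * q.2) * hopfMonomial q p := by
  simp only [hopfMonomial, mul_pow, mul_assoc]

variable {n : ℕ} (hn : 1 ≤ n)
include hn

theorem summable_greenCoeff_mul_pow_add {z : ℝ} (hz : z ∈ Ico 0 1) (a : ℕ) :
    Summable fun q : ℕ × ℕ ↦ greenCoeff n q * z ^ (a + q.1 + 1 + 2 * q.2) := by
  refine ((summable_greenCoeff_mul_pow hn (abs_lt.2 ⟨?_, hz.2⟩)).mul_left (z ^ a)).congr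
    fun q ↦ by ring
  linarith [hz.1]

theorem hasSum_greenCoeff_mul_pow_mul_hopfMonomial {z : ℝ} (hz : z ∈ Ico 0 1) (a : ℕ) {p : ℝ × ℝ}
    (hp : p ∈ hopfDomain) :
    HasSum (fun q ↦ greenCoeff n q * z ^ (a + q.1 + 1 + 2 * q.2) * hopfMonomial q p)
      (z ^ a * hopfGreen n (z * p.1, p.2)) := by
  refine ((hasSum_greenCoeff_mul_hopfMonomial (p := (z * p.1, p.2)) hn
    (abs_mul_fst_lt_one hz hp)).mul_left (z ^ a)).congr_fun fun q ↦ ?_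
  rw [hopfMonomial_mul_fst]
  ring

theorem abs_regularizedWeight_le {z : ℝ} (hz : z ∈ Icc 0 1) (q : ℕ × ℕ) :
    |regularizedWeight n z q| ≤ heatCoeff n q := by
  have habel := abelFactor_mem_Icc (a := q.2 + n) (b := q.2 + q.1 + n + 1) (by omega) (by omega)
    (x := z ^ 2) ⟨sq_nonneg z, pow_le_one₀ hz.1 hz.2⟩
  have hheat := heatCoeff_nonneg n q
  have hpow := pow_nonneg hz.1 (n + q.1 + 1 + 2 * q.2)
  rw [regularizedWeight, abs_of_nonneg (mul_nonneg (mul_nonneg hheat habel.1) hpow), mul_assoc]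
  exact mul_le_of_le_one_right hheat (mul_le_one₀ habel.2 hpow (pow_le_one₀ hz.1 hz.2))

theorem tendsto_regularizedWeight (q : ℕ × ℕ) :
    Tendsto (fun z ↦ regularizedWeight n z q) (𝓝[<] 1) (𝓝 (heatCoeff n q)) := by
  have hcont : ContinuousOn (fun z ↦ regularizedWeight n z q) (Icc 0 1) := by
    have habel := (continuousOn_abelFactor (a := q.2 + n) (b := q.2 + q.1 + n + 1)
      (by omega) (by omega)).comp (f := fun z : ℝ ↦ z ^ 2) (s := Icc 0 1) (by fun_prop)
      fun z hz ↦ ⟨sq_nonneg z, pow_le_one₀ hz.1 hz.2⟩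
    exact (continuousOn_const.mul habel).mul (by fun_prop)
  have hvalue : regularizedWeight n 1 q = heatCoeff n q := by
    rw [regularizedWeight, one_pow, abelFactor_one (by omega) (by omega), mul_one, one_pow, mul_one]
  rw [← hvalue, ← nhdsWithin_Ico_eq_nhdsLT zero_lt_one]
  exact (hcont 1 (right_mem_Icc.2 zero_le_one)).mono Ico_subset_Icc_self

variable {p : ℝ × ℝ} (hp : p ∈ hopfDomain) {t : ℝ}
include hp

theorem regularizedGreen_eq_hopfSeries (ht : 0 < t) {z : ℝ} (hz : z ∈ Ico 0 1) :
    regularizedGreen n z t p =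
      hopfSeries n (fun q ↦ regularizedWeight n z q / hopfEigenvalue n q) t p := by
  have habs (q : ℕ × ℕ) := abs_div_hopfEigenvalue_le hn (abs_of_nonneg (heatCoeff_nonneg n q)).le
  refine (tsum_mul_hopfEvolution_eq_hopfSeries hn hp ht habs hz
    (ρ := fun q ↦ factorialRatioDiff (q.2 + n) (q.2 + q.1 + n + 1)) (fun q j ↦ ?_)
    fun m k j ↦ greenCoeff_mul_monomialJacobiCoeff hn m k j).trans ?_
  · rw [abs_of_nonneg (factorialRatioDiff_nonneg _ _ j)]
    exact le_hasSum (hasSum_factorialRatioDiff (by omega) (by omega)) j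
      fun i _ ↦ factorialRatioDiff_nonneg _ _ i
  · congr 1
    funext q
    rw [regularizedWeight, abelFactor]
    ring

theorem hopfSeries_regularizedWeight_eq_tsum (ht : 0 < t) {z : ℝ} (hz : z ∈ Ico 0 1) :
    hopfSeries n (regularizedWeight n z) t p =
      ∑' q, (1 - z ^ 2) * (4 * n * (n + 1) * greenCoeff (n + 1) q) *
        z ^ (n + q.1 + 1 + 2 * q.2) * hopfEvolution n t q p := by
  have hz_sq : z ^ 2 ∈ Ico 0 1 := ⟨sq_nonneg z, pow_lt_one₀ hz.1 hz.2 two_ne_zero⟩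
  have habs (q : ℕ × ℕ) := (abs_of_nonneg (heatCoeff_nonneg n q)).le
  refine .symm <| (tsum_mul_hopfEvolution_eq_hopfSeries hn hp ht habs hz
    (ρ := fun q j ↦ (1 - z ^ 2) * factorialRatio (q.2 + n) (q.2 + q.1 + n + 1) j)
    (fun q j ↦ ?_) fun m k j ↦ ?_).trans ?_
  · rw [abs_of_nonneg (mul_nonneg (sub_nonneg.2 hz_sq.2.le) (factorialRatio_nonneg _ _ j))]
    exact mul_le_one₀ (sub_le_self 1 hz_sq.1) (factorialRatio_nonneg _ _ j)
      (factorialRatio_le_one _ _ j)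
  · rw [mul_assoc, greenCoeff_succ_mul_monomialJacobiCoeff hn]
    ring
  · congr 1
    funext q
    simp only [mul_assoc, regularizedWeight]
    rw [(hasSum_one_sub_mul_factorialRatio_mul_pow (by omega) (by omega) hz_sq).tsum_eq]

theorem hopfSeries_regularizedWeight_nonneg (ht : 0 < t) {z : ℝ} (hz : z ∈ Ico 0 1) :
    0 ≤ hopfSeries n (regularizedWeight n z) t p := by
  have hconst : 0 ≤ (1 - z ^ 2) * (4 * n * (n + 1)) :=
    mul_nonneg (sub_nonneg.2 (pow_le_one₀ hz.1 hz.2.le)) (by positivity)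
  rw [hopfSeries_regularizedWeight_eq_tsum hn hp ht hz]
  refine tsum_mul_hopfEvolution_nonneg hn ht.le ?_ (fun y hy ↦ ?_) hp
  · exact ((summable_greenCoeff_mul_pow_add n.succ_pos hz n).mul_left
      ((1 - z ^ 2) * (4 * n * (n + 1)))).congr fun q ↦ by ring
  · have h := (hasSum_greenCoeff_mul_pow_mul_hopfMonomial n.succ_pos hz n hy).mul_left
      ((1 - z ^ 2) * (4 * n * (n + 1)))
    have hdomain : (z * y.1, y.2) ∈ hopfDomain :=
      ⟨⟨mul_nonneg hz.1 hy.1.1, mul_le_one₀ hz.2.le hy.1.1 hy.1.2⟩, hy.2⟩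
    refine (mul_nonneg hconst (mul_nonneg (pow_nonneg hz.1 n)
      (hopfGreen_nonneg (n + 1) hdomain))).trans_eq ?_
    rw [← h.tsum_eq]
    exact tsum_congr fun q ↦ by ring

theorem summable_greenCoeff_mul_pow_mul_hopfEvolution (ht : 0 ≤ t) {z : ℝ} (hz : z ∈ Ico 0 1) :
    Summable fun q ↦ greenCoeff n q * z ^ (n + q.1 + 1 + 2 * q.2) * hopfEvolution n t q p := by
  refine (summable_greenCoeff_mul_pow_add hn hz n).norm.of_norm_bounded fun q ↦ ?_
  rw [norm_mul]
  exact mul_le_of_le_one_right (norm_nonneg _) (abs_hopfEvolution_le_one hn ht q hp)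

theorem tendsto_regularizedGreen_nhdsGT_zero {z : ℝ} (hz : z ∈ Ico 0 1) :
    Tendsto (fun t ↦ regularizedGreen n z t p) (𝓝[>] 0)
      (𝓝 (z ^ n * hopfGreen n (z * p.1, p.2))) := by
  rw [← (hasSum_greenCoeff_mul_pow_mul_hopfMonomial hn hz n hp).tsum_eq]
  refine tendsto_tsum_of_dominated_convergence (summable_greenCoeff_mul_pow_add hn hz n)
    (fun q ↦ ?_) (eventually_mem_nhdsWithin.mono fun t ht q ↦ ?_)
  · rw [← hopfEvolution_zero n]
    exact ((continuous_hopfEvolution n q p).tendsto 0 |>.mono_left nhdsWithin_le_nhds).const_mul _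
  · have hcoeff := mul_nonneg (greenCoeff_nonneg n q) (pow_nonneg hz.1 (n + q.1 + 1 + 2 * q.2))
    rw [norm_mul, norm_of_nonneg hcoeff]
    exact mul_le_of_le_one_right hcoeff (abs_hopfEvolution_le_one hn (le_of_lt ht) q hp)

theorem regularizedGreen_mono (ht : 0 ≤ t) {y z : ℝ} (hy : 0 ≤ y) (hyz : y ≤ z) (hz : z < 1) :
    regularizedGreen n y t p ≤ regularizedGreen n z t p := by
  have hy_mem : y ∈ Ico 0 1 := ⟨hy, hyz.trans_lt hz⟩
  have hz_mem : z ∈ Ico 0 1 := ⟨hy.trans hyz, hz⟩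
  rw [← sub_nonneg, regularizedGreen, regularizedGreen,
    ← (summable_greenCoeff_mul_pow_mul_hopfEvolution hn hp ht hz_mem).tsum_sub
      (summable_greenCoeff_mul_pow_mul_hopfEvolution hn hp ht hy_mem)]
  simp only [← sub_mul]
  refine tsum_mul_hopfEvolution_nonneg hn ht ((summable_greenCoeff_mul_pow_add hn hz_mem n).sub
    (summable_greenCoeff_mul_pow_add hn hy_mem n)) (fun x hx ↦ ?_) hp
  simp only [sub_mul]
  rw [((hasSum_greenCoeff_mul_pow_mul_hopfMonomial hn hz_mem n hx).sub
    (hasSum_greenCoeff_mul_pow_mul_hopfMonomial hn hy_mem n hx)).tsum_eq, sub_nonneg]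
  exact pow_mul_hopfGreen_le_pow_mul_hopfGreen n hy_mem ⟨hyz, hz.le⟩ hx
    (one_sub_two_mul_mul_cos_add_sq_pos (abs_mul_fst_lt_one hz_mem hx) _)

theorem regularizedGreen_anti {s : ℝ} (hs : 0 < s) (hst : s ≤ t) {z : ℝ} (hz : z ∈ Ico 0 1) :
    regularizedGreen n z t p ≤ regularizedGreen n z s p := by
  have hweight := abs_regularizedWeight_le hn (Ico_subset_Icc_self hz)
  rw [regularizedGreen_eq_hopfSeries hn hp hs hz,
    regularizedGreen_eq_hopfSeries hn hp (hs.trans_le hst) hz,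
    ← integral_hopfSeries hn hp hs hweight,
    ← integral_hopfSeries hn hp (hs.trans_le hst) hweight]
  refine setIntegral_mono_set (integrableOn_hopfSeries hn hp hs hweight) ?_
    (Ioi_subset_Ioi hst).eventuallyLE
  exact ae_restrict_of_forall_mem measurableSet_Ioi fun τ hτ ↦
    hopfSeries_regularizedWeight_nonneg hn hp (hs.trans hτ) hz

theorem regularizedGreen_le_pow_mul_hopfGreen (ht : 0 < t) {z : ℝ} (hz : z ∈ Ico 0 1) :
    regularizedGreen n z t p ≤ z ^ n * hopfGreen n (z * p.1, p.2) := by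
  refine ge_of_tendsto (tendsto_regularizedGreen_nhdsGT_zero hn hp hz) ?_
  filter_upwards [Ioc_mem_nhdsGT ht] with s hs
  exact regularizedGreen_anti hn hp hs.1 hs.2 hz

end Regularization

/-! ### Removal of the regularization -/

section Limit

theorem integral_Ioi_eq_of_tendsto_of_nonneg {f : ℝ → ℝ} {a I : ℝ} (hf : ∀ t > a, 0 ≤ f t)
    (hintegrable : ∀ t > a, IntegrableOn f (Ioi t))
    (hlim : Tendsto (fun t ↦ ∫ x in Ioi t, f x) (𝓝[>] a) (𝓝 I)) : ∫ x in Ioi a, f x = I := by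
  obtain ⟨u, -, hu_gt, hu⟩ := exists_seq_strictAnti_tendsto a
  refine (aecover_Ioi_of_Ioi (μ := volume) hu).integral_eq_of_tendsto_of_nonneg_ae I
    (ae_restrict_of_forall_mem measurableSet_Ioi hf)
    (fun j ↦ (hintegrable _ (hu_gt j)).mono_measure Measure.restrict_le_self) ?_
  refine (hlim.comp (tendsto_nhdsWithin_iff.2 ⟨hu, .of_forall hu_gt⟩)).congr fun j ↦ ?_
  rw [Function.comp_apply, Measure.restrict_restrict measurableSet_Ioi,
    inter_eq_left.2 (Ioi_subset_Ioi (hu_gt j).le)]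

theorem tendsto_pow_mul_hopfGreen (n : ℕ) {p : ℝ × ℝ}
    (hp : 1 - 2 * p.1 * cos p.2 + p.1 ^ 2 ≠ 0) :
    Tendsto (fun z ↦ z ^ n * hopfGreen n (z * p.1, p.2)) (𝓝[<] 1) (𝓝 (hopfGreen n p)) := by
  have hcont : ContinuousAt (fun z ↦ z ^ n * hopfGreen n (z * p.1, p.2)) 1 := by
    unfold hopfGreen
    refine (continuous_pow n).continuousAt.mul (.div (by fun_prop) (by fun_prop) ?_)
    simpa only [one_mul] using pow_ne_zero (n + 1) hp
  simpa only [ContinuousAt, one_mul, one_pow] using hcont.mono_left nhdsWithin_le_nhds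

variable {n : ℕ} (hn : 1 ≤ n) {p : ℝ × ℝ} (hp : p ∈ hopfDomain)
include hn hp

theorem hopfSeries_heatCoeff_nonneg {t : ℝ} (ht : 0 < t) :
    0 ≤ hopfSeries n (heatCoeff n) t p := by
  refine ge_of_tendsto (tendsto_hopfSeries hn hp ht ?_ (tendsto_regularizedWeight hn)) ?_ <;>
    filter_upwards [Ico_mem_nhdsLT zero_lt_one] with z hz
  · exact abs_regularizedWeight_le hn (Ico_subset_Icc_self hz)
  · exact hopfSeries_regularizedWeight_nonneg hn hp ht hz

theorem tendsto_regularizedGreen_nhdsLT_one {t : ℝ} (ht : 0 < t) :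
    Tendsto (fun z ↦ regularizedGreen n z t p) (𝓝[<] 1)
      (𝓝 (hopfSeries n (fun q ↦ heatCoeff n q / hopfEigenvalue n q) t p)) := by
  refine (tendsto_hopfSeries hn hp ht ?_ fun q ↦
    (tendsto_regularizedWeight hn q).div_const _).congr' ?_ <;>
    filter_upwards [Ico_mem_nhdsLT zero_lt_one] with z hz
  · exact fun q ↦ abs_div_hopfEigenvalue_le hn
      (abs_regularizedWeight_le hn (Ico_subset_Icc_self hz) q)
  · exact (regularizedGreen_eq_hopfSeries hn hp ht hz).symm

theorem regularizedGreen_le_hopfSeries {t : ℝ} (ht : 0 < t) {z : ℝ} (hz : z ∈ Ico 0 1) :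
    regularizedGreen n z t p ≤
      hopfSeries n (fun q ↦ heatCoeff n q / hopfEigenvalue n q) t p := by
  refine ge_of_tendsto (tendsto_regularizedGreen_nhdsLT_one hn hp ht) ?_
  filter_upwards [Ico_mem_nhdsLT hz.2] with y hy
  exact regularizedGreen_mono hn hp ht.le hz.1 hy.1 hy.2

variable (hpos : 0 < 1 - 2 * p.1 * cos p.2 + p.1 ^ 2)
include hpos

theorem hopfSeries_le_hopfGreen {t : ℝ} (ht : 0 < t) :
    hopfSeries n (fun q ↦ heatCoeff n q / hopfEigenvalue n q) t p ≤ hopfGreen n p := by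
  refine le_of_tendsto (tendsto_regularizedGreen_nhdsLT_one hn hp ht) ?_
  filter_upwards [Ico_mem_nhdsLT zero_lt_one] with z hz
  refine (regularizedGreen_le_pow_mul_hopfGreen hn hp ht hz).trans ?_
  have h := pow_mul_hopfGreen_le_pow_mul_hopfGreen n hz ⟨hz.2.le, le_rfl⟩ hp
  simp only [one_mul, one_pow] at h
  exact h hpos

theorem tendsto_hopfSeries_nhdsGT_zero :
    Tendsto (fun t ↦ hopfSeries n (fun q ↦ heatCoeff n q / hopfEigenvalue n q) t p) (𝓝[>] 0)
      (𝓝 (hopfGreen n p)) := by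
  refine tendsto_order.2 ⟨fun c hc ↦ ?_, fun c hc ↦ ?_⟩
  · have hlim : Tendsto (fun z ↦ z ^ n * hopfGreen n (z * p.1, p.2)) (𝓝[<] 1)
        (𝓝 (hopfGreen n p)) := tendsto_pow_mul_hopfGreen n hpos.ne'
    obtain ⟨z, hcz, hz⟩ :=
      ((hlim.eventually_const_lt hc).and (Ico_mem_nhdsLT zero_lt_one)).exists
    filter_upwards [(tendsto_regularizedGreen_nhdsGT_zero hn hp hz).eventually_const_lt hcz,
      self_mem_nhdsWithin] with t hct ht
    exact hct.trans_le (regularizedGreen_le_hopfSeries hn hp ht hz)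
  · filter_upwards [self_mem_nhdsWithin] with t ht
    exact (hopfSeries_le_hopfGreen hn hp hpos ht).trans_lt hc

theorem integral_hopfSeries_heatCoeff :
    ∫ t in Ioi (0 : ℝ), hopfSeries n (heatCoeff n) t p = hopfGreen n p := by
  have habs (q : ℕ × ℕ) := (abs_of_nonneg (heatCoeff_nonneg n q)).le
  refine integral_Ioi_eq_of_tendsto_of_nonneg (fun t ht ↦ hopfSeries_heatCoeff_nonneg hn hp ht)
    (fun t ht ↦ integrableOn_hopfSeries hn hp ht habs)
    ((tendsto_hopfSeries_nhdsGT_zero hn hp hpos).congr' ?_)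
  filter_upwards [self_mem_nhdsWithin] with t ht
  exact (integral_hopfSeries hn hp ht habs).symm

end Limit

/-! ### The heat kernel -/

section Kernel

variable {n : ℕ} (hn : 1 ≤ n)
include hn

theorem gamma_two_mul_natCast_eq_factorial : Gamma (2 * n) = (2 * n - 1).factorial := by
  rw [← Gamma_nat_eq_factorial, Nat.cast_sub (by lia)]
  push_cast
  ring_nf

theorem gamma_two_mul_mul_eq_heatCoeff (q : ℕ × ℕ) :
    Gamma (2 * n) / (2 * π ^ (2 * n + 2)) * (2 * q.2 + q.1 + 2 * n + 1) * (q.1 + 1) *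
        (q.2 + q.1 + 2 * n).choose (2 * n - 1) =
      Gamma n * Gamma (n + 1) / (8 * π ^ (2 * n + 2)) * heatCoeff n q := by
  have hn0 : (n : ℝ) ≠ 0 := by positivity
  have hfact : (n.factorial : ℝ) = n * Gamma n := by
    rw [← Gamma_nat_eq_factorial, Gamma_add_one hn0]
  have hGamma : Gamma n ≠ 0 := (Gamma_pos_of_pos (by positivity)).ne'
  rw [heatCoeff, hfact, Gamma_add_one hn0, gamma_two_mul_natCast_eq_factorial hn]
  field_simp
  ring

variable {J : ℕ → ℕ → ℕ → ℝ → ℝ} (hJ : IsJacobi J) {r η : ℝ} (hr : cos r ≠ 0) (hη : sin η ≠ 0)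
include hJ hr hη

theorem pTerm_mul_exp_eq (t : ℝ) (q : ℕ × ℕ) :
    pTerm n J t r η q * exp (-(4 * n * (n + 1)) * t) =
      Gamma n * Gamma (n + 1) / (8 * π ^ (2 * n + 2)) / (cos r * sin η) *
        (heatCoeff n q * hopfMode n q (cos r, η) * exp (-hopfEigenvalue n q * t)) := by
  have hη0 : η ≠ 0 := fun h ↦ hη (h ▸ sin_zero)
  have hexp : exp (-hopfEigenvalue n q * t) =
      exp (-(4 * ((q.2 : ℝ) * (q.2 + 2 * n + q.1 + 1) + n * q.1)) * t) *
        exp (-(4 * n * (n + 1)) * t) := by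
    rw [← exp_add, hopfEigenvalue]
    ring_nf
  rw [pTerm, gamma_two_mul_mul_eq_heatCoeff hn, vertFactor, if_neg hη0, cos_two_mul,
    hJ.eq_eval_jacobiPoly, hopfMode, eval_hopfRadial, hexp]
  field_simp
  ring

theorem pKernel_mul_exp_eq (t : ℝ) :
    pKernel n J t r η * exp (-(4 * n * (n + 1)) * t) =
      Gamma n * Gamma (n + 1) / (8 * π ^ (2 * n + 2)) / (cos r * sin η) *
        hopfSeries n (heatCoeff n) t (cos r, η) := by
  rw [pKernel, hopfSeries, ← tsum_mul_right, ← tsum_mul_left]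
  exact tsum_congr (pTerm_mul_exp_eq hn hJ hr hη t)

end Kernel

/-- the Green function of the conformal sub-Laplacian `-L + 4n(n+1)` on
`S^{4n+3}`. -/
theorem stmt_8 (n : ℕ) (hn : 1 ≤ n) (J : ℕ → ℕ → ℕ → ℝ → ℝ) (hJ : IsJacobi J)
    (r η : ℝ) (hr : r ∈ Set.Ico 0 (π / 2)) (hη : η ∈ Set.Ioo 0 π) :
    (∫ t in Set.Ioi (0 : ℝ), pKernel n J t r η * Real.exp (-(4 * n * (n + 1)) * t)) =
      Real.Gamma n * Real.Gamma (n + 1) /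
        (8 * π ^ (2 * n + 2) *
          (1 - 2 * Real.cos r * Real.cos η + Real.cos r ^ 2) ^ (n + 1)) := by
  have hcos : 0 < cos r := cos_pos_of_mem_Ioo ⟨by linarith [hr.1, pi_pos], hr.2⟩
  have hsin : 0 < sin η := sin_pos_of_mem_Ioo hη
  have hmem : (cos r, η) ∈ hopfDomain := ⟨⟨hcos.le, cos_le_one r⟩, Ioo_subset_Icc_self hη⟩
  have hpos : 0 < 1 - 2 * cos r * cos η + cos r ^ 2 :=
    calc 0 < (cos r - cos η) ^ 2 + sin η ^ 2 := by positivity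
      _ = 1 - 2 * cos r * cos η + cos r ^ 2 := by rw [sin_sq]; ring
  simp_rw [pKernel_mul_exp_eq hn hJ hcos.ne' hsin.ne', integral_const_mul]
  rw [integral_hopfSeries_heatCoeff hn hmem hpos, hopfGreen]
  field_simp
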